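/- arXiv:1004.1854 — 9 statements merged into one kernel-verified Lean document; each statement's English description precedes it below -/
import Mathlib

section
/- In every network contribution game in which all reward functions f_e belong to class C, every pairwise equilibrium achieves at least half of the optimal social welfare: if s is a pairwise equilibrium, then for every state s* one has w(s*) ≤ 2·w(s). In particular, for games with rewards in class C that possess a pairwise equilibrium, the price of anarchy for pairwise equilibria is at most 2. -/
open Finset

/-- A network contribution game on a finite simple undirected graph. -/
structure NCGame (V : Type) [Fintype V] [DecidableEq V] where
  /-- adjacency relation of the (simple, undirected) graph -/
  Adj : V → V → Prop
  adj_symm : ∀ u v, Adj u v → Adj v u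
  adj_irrefl : ∀ v, ¬ Adj v v
  /-- budget of each player -/
  B : V → ℝ
  B_nonneg : ∀ v, 0 ≤ B v
  /-- reward function of each edge; `f u v x y` is the reward of edge `(u,v)`
  when `u` contributes `x` and `v` contributes `y`. -/
  f : V → V → ℝ → ℝ → ℝ
  f_comm : ∀ u v x y, f u v x y = f v u x y
  f_symm : ∀ u v x y, f u v x y = f u v y x
  f_nonneg : ∀ u v x y, 0 ≤ x → 0 ≤ y → 0 ≤ f u v x y
  f_mono : ∀ u v y, 0 ≤ y → MonotoneOn (fun x => f u v x y) (Set.Ici 0)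

variable {V : Type} [Fintype V] [DecidableEq V]

/-- A state: `s v u` is the effort player `v` puts on the edge `(v,u)`.
It is valid if efforts are nonnegative, supported on edges, and within budget. -/
def validState (g : NCGame V) (s : V → V → ℝ) : Prop :=
  (∀ v u, 0 ≤ s v u) ∧ (∀ v u, ¬ g.Adj v u → s v u = 0) ∧
  (∀ v, ∑ u, s v u ≤ g.B v)

open Classical in
/-- utility of player `v` -/
noncomputable def util (g : NCGame V) (s : V → V → ℝ) (v : V) : ℝ :=
  ∑ u, if g.Adj v u then g.f v u (s v u) (s u v) else 0

/-- social welfare -/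
noncomputable def welfare (g : NCGame V) (s : V → V → ℝ) : ℝ :=
  ∑ v, util g s v

/-- Nash equilibrium: no unilateral improving deviation. -/
def IsNashEq (g : NCGame V) (s : V → V → ℝ) : Prop :=
  validState g s ∧
  ∀ v (t : V → ℝ), validState g (Function.update s v t) →
    util g (Function.update s v t) v ≤ util g s v

/-- Pairwise equilibrium: Nash and no bilateral improving deviation. -/
def IsPairwiseEq (g : NCGame V) (s : V → V → ℝ) : Prop :=
  IsNashEq g s ∧
  ∀ u v (tu tv : V → ℝ), u ≠ v →
    validState g (Function.update (Function.update s u tu) v tv) →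
    ¬(util g s u < util g (Function.update (Function.update s u tu) v tv) u ∧
      util g s v < util g (Function.update (Function.update s u tu) v tv) v)

/-- Strong equilibrium: no coalition has a joint deviation strictly improving
the utility of all its members. -/
def IsStrongEq (g : NCGame V) (s : V → V → ℝ) : Prop :=
  validState g s ∧
  ∀ (C : Finset V) (s' : V → V → ℝ), C.Nonempty → validState g s' →
    (∀ v, v ∉ C → s' v = s v) →
    ∃ v ∈ C, util g s' v ≤ util g s v

/-- class `C`: symmetric, nonnegative, nondecreasing, coordinate-convex. -/
def InClassC (f : ℝ → ℝ → ℝ) : Prop :=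
  (∀ x y, 0 ≤ x → 0 ≤ y → 0 ≤ f x y) ∧
  (∀ x y, f x y = f y x) ∧
  (∀ y, 0 ≤ y → MonotoneOn (fun x => f x y) (Set.Ici 0)) ∧
  (∀ y, 0 ≤ y → ConvexOn ℝ (Set.Ici 0) (fun x => f x y))

/-- class `C₀`: members of `C` vanishing when one argument is `0`. -/
def InClassC0 (f : ℝ → ℝ → ℝ) : Prop :=
  InClassC f ∧ ∀ x, 0 ≤ x → f x 0 = 0

/-- An edge is tight in `s` if both endpoints contribute `0` or their full budget. -/
def tightState (g : NCGame V) (s : V → V → ℝ) : Prop :=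
  ∀ u v, g.Adj u v → s u v = 0 ∨ s u v = g.B u

lemma aux_f_mono (g : NCGame V) (u v : V) {x y x' y' : ℝ} (hx : 0 ≤ x) (hy : 0 ≤ y)
    (hxx : x ≤ x') (hyy : y ≤ y') : g.f u v x y ≤ g.f u v x' y' := by
  have h1 : g.f u v x y ≤ g.f u v x' y :=
    g.f_mono u v y hy (Set.mem_Ici.2 hx) (Set.mem_Ici.2 (hx.trans hxx)) hxx
  have h2 : g.f u v y x' ≤ g.f u v y' x' :=
    g.f_mono u v x' (hx.trans hxx) (Set.mem_Ici.2 hy) (Set.mem_Ici.2 (hy.trans hyy)) hyy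
  rw [g.f_symm u v y x', g.f_symm u v y' x'] at h2
  exact h1.trans h2

lemma aux_convex {φ : ℝ → ℝ} (h : ConvexOn ℝ (Set.Ici 0) φ) {B p : ℝ} (hB : 0 ≤ B)
    (hp : 0 ≤ p) (hp1 : p ≤ 1) : φ (p * B) ≤ p * φ B + (1 - p) * φ 0 := by
  have := h.2 (Set.mem_Ici.2 hB) (Set.mem_Ici.2 le_rfl) hp (sub_nonneg.2 hp1) (by ring)
  simpa using this

open Classical in
/-- baseline -/
noncomputable def auxBase (g : NCGame V) (v : V) : ℝ :=
  ∑ u, if g.Adj v u then g.f v u 0 0 else 0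

lemma aux_base_nonneg (g : NCGame V) (v : V) : 0 ≤ auxBase g v := by
  classical
  unfold auxBase
  refine sum_nonneg fun u _ => ?_
  split_ifs
  · exact g.f_nonneg _ _ _ _ le_rfl le_rfl
  · exact le_rfl

lemma aux_base_le (g : NCGame V) (t : V → V → ℝ) (ht : ∀ v u, 0 ≤ t v u) (v : V) :
    auxBase g v ≤ util g t v := by
  classical
  unfold auxBase util
  refine sum_le_sum fun u _ => ?_
  split_ifs
  · exact aux_f_mono g _ _ le_rfl le_rfl (ht _ _) (ht _ _)
  · exact le_rfl

lemma aux_util_ge (g : NCGame V) (t : V → V → ℝ) (ht : ∀ v u, 0 ≤ t v u) (v u : V)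
    (h : g.Adj v u) :
    auxBase g v + (g.f v u (t v u) (t u v) - g.f v u 0 0) ≤ util g t v := by
  classical
  have key : g.f v u (t v u) (t u v) - g.f v u 0 0 ≤
      ∑ w, ((if g.Adj v w then g.f v w (t v w) (t w v) else 0) -
        (if g.Adj v w then g.f v w 0 0 else 0)) := by
    have := single_le_sum (s := univ) (f := fun w =>
        ((if g.Adj v w then g.f v w (t v w) (t w v) else 0) -
        (if g.Adj v w then g.f v w 0 0 else 0))) (fun w _ => by
          split_ifs
          · exact sub_nonneg.2 (aux_f_mono g _ _ le_rfl le_rfl (ht _ _) (ht _ _))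
          · simp) (mem_univ u)
    simpa [h] using this
  rw [sum_sub_distrib] at key
  unfold auxBase util
  linarith

lemma aux_valid_update (g : NCGame V) (s : V → V → ℝ) (hs : validState g s) (v u : V)
    (h : g.Adj v u) : validState g (Function.update s v (Pi.single u (g.B v))) := by
  obtain ⟨h1, h2, h3⟩ := hs
  refine ⟨fun a b => ?_, fun a b hab => ?_, fun a => ?_⟩
  · by_cases ha : a = v
    · subst ha
      by_cases hb : b = u
      · subst hb; simpa using g.B_nonneg a
      · simp [hb]
    · simpa [ha] using h1 a b
  · by_cases ha : a = v
    · subst ha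
      have hb : b ≠ u := by rintro rfl; exact hab h
      simp [hb]
    · simpa [ha] using h2 a b hab
  · by_cases ha : a = v
    · subst ha
      simp
    · simpa [ha] using h3 a

lemma aux_nash (g : NCGame V) (s : V → V → ℝ) (hs : IsNashEq g s) (v u : V)
    (h : g.Adj v u) :
    g.f v u (g.B v) 0 - g.f v u 0 0 ≤ util g s v - auxBase g v := by
  have hv := aux_valid_update g s hs.1 v u h
  have h1 := hs.2 v _ hv
  have h2 := aux_util_ge g _ hv.1 v u h
  have hne : u ≠ v := by rintro rfl; exact g.adj_irrefl _ h
  have h3 : g.f v u (g.B v) 0 ≤ g.f v u (g.B v) (s u v) :=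
    aux_f_mono g _ _ (g.B_nonneg v) le_rfl le_rfl (hs.1.1 _ _)
  simp [hne] at h2
  linarith

lemma aux_pair (g : NCGame V) (s : V → V → ℝ) (hs : IsPairwiseEq g s) (v u : V)
    (h : g.Adj v u) :
    g.f v u (g.B v) (g.B u) - g.f v u 0 0 ≤ util g s v - auxBase g v ∨
    g.f v u (g.B v) (g.B u) - g.f v u 0 0 ≤ util g s u - auxBase g u := by
  have hne : v ≠ u := by rintro rfl; exact g.adj_irrefl _ h
  have hv := aux_valid_update g _ (aux_valid_update g s hs.1.1 v u h) u v (g.adj_symm _ _ h)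
  have h1 := hs.2 v u _ _ hne hv
  have h2 := aux_util_ge g _ hv.1 v u h
  have h3 := aux_util_ge g _ hv.1 u v (g.adj_symm _ _ h)
  by_contra! hcon
  apply h1
  rw [g.f_comm u v, g.f_comm u v, g.f_symm v u] at h3
  simp only [Function.update_self, Function.update_of_ne hne, Pi.single_eq_same] at h2 h3
  constructor <;> linarith [hcon.1, hcon.2]

lemma aux_share (g : NCGame V) (t : V → V → ℝ) (ht : validState g t) (v : V) :
    (∀ u, 0 ≤ t v u / g.B v) ∧ (∀ u, t v u / g.B v ≤ 1) ∧
    (∀ u, t v u / g.B v * g.B v = t v u) ∧ ∑ u, t v u / g.B v ≤ 1 := by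
  obtain ⟨h1, h2, h3⟩ := ht
  have hle : ∀ u, t v u ≤ g.B v := fun u =>
    (single_le_sum (f := fun u => t v u) (fun w _ => h1 v w) (mem_univ u)).trans (h3 v)
  refine ⟨fun u => div_nonneg (h1 _ _) (g.B_nonneg _),
    fun u => div_le_one_of_le₀ (hle u) (g.B_nonneg _), fun u => ?_, ?_⟩
  · by_cases hB : g.B v = 0
    · have := hle u
      have := h1 v u
      rw [hB]; rw [hB] at *; simp; linarith
    · exact div_mul_cancel₀ _ hB
  · rw [← sum_div]
    exact div_le_one_of_le₀ (h3 v) (g.B_nonneg _)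

lemma aux_arith {p q a b c Du Dv : ℝ} (hp : 0 ≤ p) (hp1 : p ≤ 1) (hq : 0 ≤ q) (hq1 : q ≤ 1)
    (hDu : 0 ≤ Du) (hDv : 0 ≤ Dv) (hb : b ≤ Du) (hc : c ≤ Dv) (ha : a ≤ Du ∨ a ≤ Dv) :
    p * (q * a + (1 - q) * b) + (1 - p) * (q * c) ≤ p * Du + q * Dv := by
  have e1 : p * (1 - q) * b ≤ p * (1 - q) * Du :=
    mul_le_mul_of_nonneg_left hb (mul_nonneg hp (sub_nonneg.2 hq1))
  have e2 : (1 - p) * q * c ≤ (1 - p) * q * Dv :=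
    mul_le_mul_of_nonneg_left hc (mul_nonneg (sub_nonneg.2 hp1) hq)
  have hpq := mul_nonneg hp hq
  have e4 := mul_nonneg hpq hDu
  have e5 := mul_nonneg hpq hDv
  rcases ha with ha | ha
  · have e3 := mul_le_mul_of_nonneg_left ha hpq
    linarith
  · have e3 := mul_le_mul_of_nonneg_left ha hpq
    linarith

lemma aux_edge (g : NCGame V) (hC : ∀ u v, g.Adj u v → InClassC (g.f u v))
    (s : V → V → ℝ) (hs : IsPairwiseEq g s)
    (t : V → V → ℝ) (ht : validState g t) (v u : V) (h : g.Adj v u) :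
    g.f v u (t v u) (t u v) - g.f v u 0 0 ≤
      t v u / g.B v * (util g s v - auxBase g v) +
      t u v / g.B u * (util g s u - auxBase g u) := by
  obtain ⟨p0, p1, pe, -⟩ := aux_share g t ht v
  obtain ⟨q0, q1, qe, -⟩ := aux_share g t ht u
  obtain ⟨-, -, -, hcv⟩ := hC v u h
  have hBv := g.B_nonneg v
  have hBu := g.B_nonneg u
  have c1 := aux_convex (hcv (t u v) (ht.1 _ _)) hBv (p0 u) (p1 u)
  have c2 := aux_convex (hcv (g.B v) hBv) hBu (q0 v) (q1 v)
  have c3 := aux_convex (hcv 0 le_rfl) hBu (q0 v) (q1 v)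
  simp only [pe, qe] at c1 c2 c3
  rw [g.f_symm v u (t u v), g.f_symm v u (g.B u), g.f_symm v u 0 (g.B v)] at c2
  rw [g.f_symm v u (t u v)] at c3
  have n1 := aux_nash g s hs.1 v u h
  have n2 := aux_nash g s hs.1 u v (g.adj_symm _ _ h)
  rw [g.f_comm u v, g.f_comm u v] at n2
  have n3 := aux_pair g s hs v u h
  have d1 := aux_base_le g s hs.1.1.1 v
  have d2 := aux_base_le g s hs.1.1.1 u
  have key := aux_arith (p0 u) (p1 u) (q0 v) (q1 v) (sub_nonneg.2 d1) (sub_nonneg.2 d2)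
    n1 n2 n3
  have m1 := mul_le_mul_of_nonneg_left c2 (p0 u)
  have m2 := mul_le_mul_of_nonneg_left c3 (sub_nonneg.2 (p1 u))
  linarith

/-- with all reward functions in class `C`, every pairwise
equilibrium achieves at least half of the social welfare of any state:
the price of anarchy for pairwise equilibria is at most 2. -/
theorem poa_classC_le_two (g : NCGame V)
    (hC : ∀ u v, g.Adj u v → InClassC (g.f u v))
    (s : V → V → ℝ) (hs : IsPairwiseEq g s)
    (sStar : V → V → ℝ) (hStar : validState g sStar) :
    welfare g sStar ≤ 2 * welfare g s := by
  classical
  set D : V → ℝ := fun v => util g s v - auxBase g v with hD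
  have hD0 : ∀ v, 0 ≤ D v := fun v => sub_nonneg.2 (aux_base_le g s hs.1.1.1 v)
  have hsum : ∑ v, ∑ u, sStar v u / g.B v * D v ≤ ∑ v, D v := by
    refine sum_le_sum fun v _ => ?_
    rw [← sum_mul]
    exact mul_le_of_le_one_left (hD0 v) (aux_share g sStar hStar v).2.2.2
  have hmain : ∀ v, util g sStar v - auxBase g v ≤
      ∑ u, (sStar v u / g.B v * D v + sStar u v / g.B u * D u) := by
    intro v
    unfold auxBase util
    rw [← sum_sub_distrib]
    refine sum_le_sum fun u _ => ?_
    split_ifs with h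
    · exact aux_edge g hC s hs sStar hStar v u h
    · rw [sub_zero]
      exact add_nonneg (mul_nonneg ((aux_share g sStar hStar v).1 u) (hD0 v))
        (mul_nonneg ((aux_share g sStar hStar u).1 v) (hD0 u))
  have htot := sum_le_sum fun v (_ : v ∈ (univ : Finset V)) => hmain v
  simp only [sum_add_distrib, sum_sub_distrib] at htot
  rw [sum_comm (f := fun v u => sStar u v / g.B u * D u)] at htot
  have hDs : ∑ v, D v = ∑ v, util g s v - ∑ v, auxBase g v := by
    simp only [hD, sum_sub_distrib]
  have hb : 0 ≤ ∑ v, auxBase g v := sum_nonneg fun v _ => aux_base_nonneg g v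
  unfold welfare
  linarith
end

section
/- If every reward function f_e of a network contribution game belongs to class C_0, then a pairwise equilibrium exists. Concretely, let M be a greedy matching obtained by considering the edges in nonincreasing order of c_e = f_e(B_u, B_v) (for e = (u,v)) and adding each edge whenever the result is still a matching; then the state in which every player matched by M places its entire budget on its matching edge, and every unmatched player places zero effort on all its edges, is a pairwise equilibrium. -/
open Finset

variable {V : Type} [Fintype V] [DecidableEq V]

/-- maximum possible reward of an edge: both endpoints contribute their full budget -/
noncomputable def maxReward (g : NCGame V) (e : V × V) : ℝ :=
  g.f e.1 e.2 (g.B e.1) (g.B e.2)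

/-- one step of the greedy matching: add the edge `e` if it is disjoint
from all previously chosen edges. -/
def greedyStep (acc : List (V × V)) (e : V × V) : List (V × V) :=
  if ∀ e' ∈ acc, e'.1 ≠ e.1 ∧ e'.1 ≠ e.2 ∧ e'.2 ≠ e.1 ∧ e'.2 ≠ e.2
  then acc ++ [e] else acc

/-- the greedy matching obtained by scanning the list of edges `L`
(sorted nonincreasingly by maximum reward) in order. -/
def greedyMatching (L : List (V × V)) : List (V × V) := L.foldl greedyStep []

/-- the state where every player matched by `M` puts its whole budget on its
matching edge, and all other efforts are `0`. -/
noncomputable def matchedState (g : NCGame V) (M : List (V × V)) : V → V → ℝ :=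
  fun v u => if (v, u) ∈ M ∨ (u, v) ∈ M then g.B v else 0

def shareV (e e' : V × V) : Prop :=
  e'.1 = e.1 ∨ e'.1 = e.2 ∨ e'.2 = e.1 ∨ e'.2 = e.2

lemma greedy_aux (g : NCGame V) (L : List (V × V))
    (hs : L.Pairwise fun e e' => maxReward g e' ≤ maxReward g e) :
    ∀ acc : List (V × V),
    (∀ a ∈ acc, ∀ e ∈ L, maxReward g e ≤ maxReward g a) →
    (∀ a ∈ acc, ∀ b ∈ acc, shareV a b → a = b) →
    (∀ a ∈ acc, a ∈ L.foldl greedyStep acc) ∧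
    (∀ a ∈ L.foldl greedyStep acc, a ∈ acc ∨ a ∈ L) ∧
    (∀ a ∈ L.foldl greedyStep acc, ∀ b ∈ L.foldl greedyStep acc, shareV a b → a = b) ∧
    (∀ e ∈ L, ∃ a ∈ L.foldl greedyStep acc, maxReward g e ≤ maxReward g a ∧ shareV e a) := by
  induction L with
  | nil =>
    intro acc h1 h2
    refine ⟨fun a h => h, fun a h => Or.inl h, h2, ?_⟩
    intro e he
    simp at he
  | cons x L ih =>
    intro acc h1 h2
    rw [List.pairwise_cons] at hs
    obtain ⟨hx, hs⟩ := hs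
    rw [List.foldl_cons]
    by_cases hc : ∀ e' ∈ acc, e'.1 ≠ x.1 ∧ e'.1 ≠ x.2 ∧ e'.2 ≠ x.1 ∧ e'.2 ≠ x.2
    · have hst : greedyStep acc x = acc ++ [x] := by
        unfold greedyStep
        rw [if_pos hc]
      rw [hst]
      obtain ⟨k1, k2, k3, k4⟩ := ih hs (acc ++ [x])
        (by
          intro a ha e he
          rw [List.mem_append, List.mem_singleton] at ha
          rcases ha with ha | rfl
          · exact h1 a ha e (List.mem_cons_of_mem _ he)
          · exact hx e he)
        (by
          intro a ha b hb hab
          rw [List.mem_append, List.mem_singleton] at ha hb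
          unfold shareV at hab
          rcases ha with ha | rfl <;> rcases hb with hb | rfl
          · exact h2 a ha b hb hab
          · have := hc a ha
            grind
          · have := hc b hb
            grind
          · rfl)
      refine ⟨fun a ha => k1 a (by simp [ha]), ?_, k3, ?_⟩
      · intro a ha
        have := k2 a ha
        simp only [List.mem_append, List.mem_singleton, List.mem_cons] at this ⊢
        tauto
      · intro e he
        rw [List.mem_cons] at he
        rcases he with rfl | he
        · exact ⟨e, k1 e (by simp), le_rfl, Or.inl rfl⟩
        · exact k4 e he
    · have hst : greedyStep acc x = acc := by
        unfold greedyStep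
        rw [if_neg hc]
      rw [hst]
      obtain ⟨k1, k2, k3, k4⟩ := ih hs acc
        (fun a ha e he => h1 a ha e (List.mem_cons_of_mem _ he)) h2
      refine ⟨k1, ?_, k3, ?_⟩
      · intro a ha
        have := k2 a ha
        simp only [List.mem_cons] at this ⊢
        tauto
      · intro e he
        rw [List.mem_cons] at he
        rcases he with rfl | he
        · push Not at hc
          obtain ⟨a, ha, hh⟩ := hc
          refine ⟨a, k1 a ha, h1 a ha e (by simp), ?_⟩
          unfold shareV
          tauto
        · exact k4 e he

lemma util_le_of (g : NCGame V) (hC : ∀ u v, g.Adj u v → InClassC0 (g.f u v))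
    (s : V → V → ℝ) (hs : validState g s) (u : V) (K : ℝ) (hK : 0 ≤ K)
    (h : ∀ w, g.Adj u w → g.f u w (g.B u) (s w u) ≤ K) : util g s u ≤ K := by
  obtain ⟨h0, -, hB⟩ := hs
  have hle : ∀ w, s u w ≤ g.B u := fun w =>
    (Finset.single_le_sum (fun i _ => h0 u i) (Finset.mem_univ w)).trans (hB u)
  have hz : ∀ w, g.Adj u w → g.f u w 0 (s w u) = 0 := fun w hw => by
    rw [g.f_symm]
    exact (hC u w hw).2 _ (h0 w u)
  unfold util
  rcases (g.B_nonneg u).eq_or_lt with hb | hb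
  · refine le_trans (le_of_eq (Finset.sum_eq_zero ?_)) hK
    intro w _
    split_ifs with hw
    · have : s u w = 0 := le_antisymm (hb ▸ hle w) (h0 u w)
      rw [this, hz w hw]
    · rfl
  · have key : ∀ w, (s u w / g.B u) * K ≥ 0 := fun w =>
      mul_nonneg (div_nonneg (h0 u w) hb.le) hK
    calc _ ≤ ∑ w, (s u w / g.B u) * K := by
          apply Finset.sum_le_sum
          intro w _
          split_ifs with hw
          · have hcx := ((hC u w hw).1.2.2.2 (s w u) (h0 w u)).2
            have hp1 : g.B u ∈ Set.Ici (0:ℝ) := hb.le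
            have hp2 : (0:ℝ) ∈ Set.Ici (0:ℝ) := le_refl (0:ℝ)
            have hp3 : s u w / g.B u + (1 - s u w / g.B u) = 1 := by ring
            have hcv := hcx hp1 hp2 (div_nonneg (h0 u w) hb.le)
              (sub_nonneg.2 ((div_le_one hb).2 (hle w))) hp3
            simp only [smul_eq_mul, mul_zero, add_zero, hz w hw] at hcv
            rw [div_mul_cancel₀ _ hb.ne'] at hcv
            exact hcv.trans (mul_le_mul_of_nonneg_left (h w hw) (div_nonneg (h0 u w) hb.le))
          · exact key w
      _ = ((∑ w, s u w) / g.B u) * K := by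
          rw [← Finset.sum_mul, Finset.sum_div]
      _ ≤ 1 * K := mul_le_mul_of_nonneg_right ((div_le_one hb).2 (hB u)) hK
      _ = K := one_mul K

lemma term_le_util (g : NCGame V) (s : V → V → ℝ) (hs : ∀ v u, 0 ≤ s v u) (u w : V)
    (hw : g.Adj u w) : g.f u w (s u w) (s w u) ≤ util g s u := by
  classical
  unfold util
  have := Finset.single_le_sum
    (f := fun w => if g.Adj u w then g.f u w (s u w) (s w u) else 0) (s := Finset.univ)
    (fun i _ => by
      show 0 ≤ if g.Adj u i then g.f u i (s u i) (s i u) else 0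
      split_ifs
      · exact g.f_nonneg _ _ _ _ (hs _ _) (hs _ _)
      · exact le_rfl) (Finset.mem_univ w)
  simp only [if_pos hw] at this
  convert this

lemma util_nonneg (g : NCGame V) (s : V → V → ℝ) (hs : ∀ v u, 0 ≤ s v u) (u : V) :
    0 ≤ util g s u := by
  unfold util
  apply Finset.sum_nonneg
  intro i _
  split_ifs
  · exact g.f_nonneg _ _ _ _ (hs _ _) (hs _ _)
  · exact le_rfl

/-- if all reward functions lie in class `C₀`, a pairwise
equilibrium exists; concretely the greedy-matching state is one. -/
theorem classC0_pairwise_exists (g : NCGame V)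
    (hC : ∀ u v, g.Adj u v → InClassC0 (g.f u v))
    (L : List (V × V))
    (hLadj : ∀ e ∈ L, g.Adj e.1 e.2)
    (hLcover : ∀ u v, g.Adj u v → (u, v) ∈ L ∨ (v, u) ∈ L)
    (hLnodup : L.Pairwise fun e e' => e ≠ e' ∧ e ≠ (e'.2, e'.1))
    (hLsorted : L.Pairwise fun e e' => maxReward g e' ≤ maxReward g e) :
    (∃ s, IsPairwiseEq g s) ∧
    IsPairwiseEq g (matchedState g (greedyMatching L)) := by
  suffices h : IsPairwiseEq g (matchedState g (greedyMatching L)) from ⟨⟨_, h⟩, h⟩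
  obtain ⟨-, m2, m3, m4⟩ := greedy_aux g L hLsorted [] (by simp) (by simp)
  change ∀ a ∈ greedyMatching L, _ at m2
  change ∀ a ∈ greedyMatching L, ∀ b ∈ greedyMatching L, _ at m3
  change ∀ e ∈ L, ∃ a ∈ greedyMatching L, _ at m4
  generalize greedyMatching L = M at m2 m3 m4 ⊢
  have mL : ∀ a ∈ M, g.Adj a.1 a.2 := fun a ha => by
    rcases m2 a ha with h | h
    · simp at h
    · exact hLadj a h
  have mAdj : ∀ u w, ((u, w) ∈ M ∨ (w, u) ∈ M) → g.Adj u w := by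
    rintro u w (h | h)
    · exact mL _ h
    · exact g.adj_symm _ _ (mL _ h)
  have mne : ∀ u w, ((u, w) ∈ M ∨ (w, u) ∈ M) → u ≠ w := by
    rintro u w h rfl
    exact g.adj_irrefl _ (mAdj _ _ h)
  have muniq : ∀ u w w', ((u, w) ∈ M ∨ (w, u) ∈ M) → ((u, w') ∈ M ∨ (w', u) ∈ M) →
      w = w' := by
    intro u w w' h h'
    have n1 := mne _ _ h
    have n2 := mne _ _ h'
    rcases h with h | h <;> rcases h' with h' | h' <;>
      · have := m3 _ h _ h' (by simp [shareV])
        simp only [Prod.mk.injEq] at this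
        grind
  set s := matchedState g M with hsdef
  have sval : ∀ u w, ((u, w) ∈ M ∨ (w, u) ∈ M) → s u w = g.B u := fun u w h => if_pos h
  have szero : ∀ u w, ¬ ((u, w) ∈ M ∨ (w, u) ∈ M) → s u w = 0 := fun u w h => if_neg h
  have s0 : ∀ v u, 0 ≤ s v u := by
    intro v u
    by_cases h : (v, u) ∈ M ∨ (u, v) ∈ M
    · rw [sval _ _ h]
      exact g.B_nonneg v
    · rw [szero _ _ h]
  have svalid : validState g s := by
    refine ⟨s0, ?_, ?_⟩
    · intro v u h
      exact szero _ _ (fun h' => h (mAdj _ _ h'))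
    · intro v
      by_cases h : ∃ u, (v, u) ∈ M ∨ (u, v) ∈ M
      · obtain ⟨u, hu⟩ := h
        rw [Finset.sum_eq_single u, sval _ _ hu]
        · intro b _ hb
          exact szero _ _ (fun h' => hb (muniq _ _ _ h' hu))
        · simp
      · rw [Finset.sum_eq_zero]
        · exact g.B_nonneg v
        · intro u _
          exact szero _ _ (fun h' => h ⟨u, h'⟩)
  have hD : ∀ u w, ((u, w) ∈ M ∨ (w, u) ∈ M) → g.f u w (g.B u) (g.B w) ≤ util g s u := by
    intro u w h
    have := term_le_util g s s0 u w (mAdj _ _ h)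
    rwa [sval _ _ h, sval _ _ h.symm] at this
  have hE : ∀ u w, g.Adj u w → g.f u w (g.B u) (s w u) ≤ util g s u := by
    intro u w hw
    by_cases h : (u, w) ∈ M ∨ (w, u) ∈ M
    · rw [sval _ _ h.symm]
      exact hD _ _ h
    · rw [szero _ _ (fun h' => h h'.symm), (hC u w hw).2 _ (g.B_nonneg u)]
      exact util_nonneg g s s0 u
  have csymm : ∀ u w, maxReward g (u, w) = maxReward g (w, u) := by
    intro u w
    simp only [maxReward]
    rw [g.f_comm, g.f_symm]
  have hM : ∀ u v, g.Adj u v →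
      maxReward g (u, v) ≤ util g s u ∨ maxReward g (u, v) ≤ util g s v := by
    have main : ∀ u v, (u, v) ∈ L →
        maxReward g (u, v) ≤ util g s u ∨ maxReward g (u, v) ≤ util g s v := by
      intro u v h
      obtain ⟨⟨a, b⟩, ha, hle, hsh⟩ := m4 _ h
      have e1 : maxReward g (a, b) ≤ util g s a := hD a b (Or.inl ha)
      have e2 : maxReward g (a, b) ≤ util g s b := by
        rw [csymm]
        exact hD b a (Or.inr ha)
      simp only [shareV] at hsh
      rcases hsh with rfl | rfl | rfl | rfl
      · exact Or.inl (hle.trans e1)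
      · exact Or.inr (hle.trans e1)
      · exact Or.inl (hle.trans e2)
      · exact Or.inr (hle.trans e2)
    intro u v h
    rcases hLcover u v h with h | h
    · exact main u v h
    · rw [csymm]
      exact (main v u h).symm
  have dev : ∀ (s' : V → V → ℝ) (u v : V), validState g s' →
      (∀ w, w ≠ u → w ≠ v → s' w = s w) →
      (g.Adj u v → maxReward g (u, v) ≤ util g s u) → util g s' u ≤ util g s u := by
    intro s' u v hv hs' hc
    apply util_le_of g hC s' hv u _ (util_nonneg g s s0 u)
    intro w hw
    by_cases hwv : w = v
    · subst hwv
      refine le_trans ?_ (hc hw)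
      simp only [maxReward]
      rw [g.f_symm, g.f_symm u w (g.B u)]
      have hle : s' w u ≤ g.B w :=
        (Finset.single_le_sum (fun i _ => hv.1 w i) (Finset.mem_univ u)).trans (hv.2.2 w)
      exact g.f_mono u w (g.B u) (g.B_nonneg u) (hv.1 w u) (g.B_nonneg w) hle
    · rw [hs' w (fun h => g.adj_irrefl u (h ▸ hw)) hwv]
      exact hE u w hw
  refine ⟨⟨svalid, ?_⟩, ?_⟩
  · intro v t ht
    refine dev _ v v ht ?_ (fun h => absurd h (g.adj_irrefl v))
    intro w hw _
    exact Function.update_of_ne hw _ _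
  · rintro u v tu tv huv ht ⟨g1, g2⟩
    have hs' : ∀ w, w ≠ u → w ≠ v →
        Function.update (Function.update s u tu) v tv w = s w := by
      intro w h1 h2
      rw [Function.update_of_ne h2, Function.update_of_ne h1]
    by_cases hadj : g.Adj u v
    · rcases hM u v hadj with h | h
      · exact absurd g1 (not_lt.2 (dev _ u v ht hs' (fun _ => h)))
      · refine absurd g2 (not_lt.2 (dev _ v u ht (fun w a b => hs' w b a) (fun _ => ?_)))
        rwa [csymm]
    · exact absurd g1 (not_lt.2 (dev _ u v ht hs' (fun h => absurd h hadj)))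
end

section
/- Suppose every reward function of a network contribution game has the form f_e(x,y) = c_e·(x+y) with a constant c_e > 0. Then a state is a Nash equilibrium if and only if it is a social optimum; equivalently, the states stable under unilateral deviations are exactly the states in which every player (with at least one incident edge) spends its entire budget and places effort only on incident edges e maximizing c_e. Consequently, every pairwise equilibrium is a social optimum, so the price of anarchy for pairwise equilibria in such games is 1. -/
open Finset

variable {V : Type} [Fintype V] [DecidableEq V]

open Classical in
noncomputable def aw (g : NCGame V) (c : V → V → ℝ) (v u : V) : ℝ := if g.Adj v u then c v u else 0

def vrow (g : NCGame V) (v : V) (t : V → ℝ) : Prop :=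
  (∀ u, 0 ≤ t u) ∧ (∀ u, ¬ g.Adj v u → t u = 0) ∧ ∑ u, t u ≤ g.B v

def bestRow (g : NCGame V) (c : V → V → ℝ) (s : V → V → ℝ) (v : V) : Prop :=
  ∀ t, vrow g v t → ∑ u, aw g c v u * t u ≤ ∑ u, aw g c v u * s v u

lemma valid_iff_row (g : NCGame V) (s : V → V → ℝ) : validState g s ↔ ∀ v, vrow g v (s v) := by
  unfold validState vrow
  constructor
  · rintro ⟨h1, h2, h3⟩ v
    exact ⟨h1 v, h2 v, h3 v⟩
  · intro h
    exact ⟨fun v => (h v).1, fun v => (h v).2.1, fun v => (h v).2.2⟩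

lemma valid_update (g : NCGame V) (s : V → V → ℝ) (hs : validState g s) (v : V) (t : V → ℝ) :
    validState g (Function.update s v t) ↔ vrow g v t := by
  rw [valid_iff_row] at hs ⊢
  constructor
  · intro h
    simpa using h v
  · intro h w
    by_cases hw : w = v
    · subst hw
      simpa using h
    · simpa [hw] using hs w

lemma util_eq (g : NCGame V) (c : V → V → ℝ)
    (hf : ∀ u v, g.Adj u v → ∀ x y, g.f u v x y = c u v * (x + y)) (s : V → V → ℝ) (v : V) :
    util g s v = ∑ u, aw g c v u * s v u + ∑ u, aw g c v u * s u v := by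
  unfold util aw
  rw [← Finset.sum_add_distrib]
  refine Finset.sum_congr rfl fun u _ => ?_
  by_cases h : g.Adj v u
  · simp only [h, if_true, hf v u h]
    ring
  · simp [h]

lemma aw_comm (g : NCGame V) (c : V → V → ℝ)
    (hf : ∀ u v, g.Adj u v → ∀ x y, g.f u v x y = c u v * (x + y)) (u v : V) :
    aw g c u v = aw g c v u := by
  unfold aw
  by_cases h : g.Adj u v
  · have h' := g.adj_symm _ _ h
    have := g.f_comm u v 1 0
    rw [hf u v h, hf v u h'] at this
    simp only [h, h', if_true]
    linarith
  · have h' : ¬ g.Adj v u := fun k => h (g.adj_symm _ _ k)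
    simp [h, h']

lemma welfare_eq (g : NCGame V) (c : V → V → ℝ)
    (hf : ∀ u v, g.Adj u v → ∀ x y, g.f u v x y = c u v * (x + y)) (s : V → V → ℝ) :
    welfare g s = 2 * ∑ v, ∑ u, aw g c v u * s v u := by
  unfold welfare
  simp only [util_eq g c hf]
  rw [Finset.sum_add_distrib, two_mul]
  congr 1
  rw [Finset.sum_comm]
  refine Finset.sum_congr rfl fun u _ => Finset.sum_congr rfl fun v _ => ?_
  rw [aw_comm g c hf]

lemma nash_iff (g : NCGame V) (c : V → V → ℝ)
    (hf : ∀ u v, g.Adj u v → ∀ x y, g.f u v x y = c u v * (x + y)) (s : V → V → ℝ)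
    (hs : validState g s) : IsNashEq g s ↔ ∀ v, bestRow g c s v := by
  have key : ∀ v t, (util g (Function.update s v t) v ≤ util g s v ↔
      ∑ u, aw g c v u * t u ≤ ∑ u, aw g c v u * s v u) := by
    intro v t
    rw [util_eq g c hf, util_eq g c hf]
    have : ∑ u, aw g c v u * (Function.update s v t) u v = ∑ u, aw g c v u * s u v := by
      refine Finset.sum_congr rfl fun u _ => ?_
      by_cases h : u = v
      · subst h
        simp [aw, g.adj_irrefl]
      · simp [h]
    rw [this]
    simp
  unfold IsNashEq bestRow
  simp only [valid_update g s hs, key, hs, true_and]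

lemma opt_iff (g : NCGame V) (c : V → V → ℝ)
    (hf : ∀ u v, g.Adj u v → ∀ x y, g.f u v x y = c u v * (x + y)) (s : V → V → ℝ)
    (hs : validState g s) :
    (∀ s', validState g s' → welfare g s' ≤ welfare g s) ↔ ∀ v, bestRow g c s v := by
  simp only [welfare_eq g c hf]
  constructor
  · intro h v t ht
    have h1 := h _ ((valid_update g s hs v t).2 ht)
    rw [← Finset.add_sum_erase _ _ (Finset.mem_univ v),
      ← Finset.add_sum_erase (a := v) _ (fun v => ∑ u, aw g c v u * s v u) (Finset.mem_univ v)] at h1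
    have h2 : ∑ x ∈ Finset.univ.erase v, ∑ u, aw g c x u * Function.update s v t x u
        = ∑ x ∈ Finset.univ.erase v, ∑ u, aw g c x u * s x u := by
      refine Finset.sum_congr rfl fun x hx => ?_
      rw [Function.update_of_ne (Finset.ne_of_mem_erase hx)]
    rw [h2] at h1
    simp only [Function.update_self] at h1
    linarith
  · intro h s' hs'
    have := Finset.sum_le_sum fun v (_ : v ∈ Finset.univ) => h v _ ((valid_iff_row g s').1 hs' v)
    linarith

lemma char_iff (g : NCGame V) (c : V → V → ℝ) (hc : ∀ u v, g.Adj u v → 0 < c u v)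
    (s : V → V → ℝ) (hs : validState g s) (v : V) :
    bestRow g c s v ↔ ((∃ u, g.Adj v u) →
        (∑ u, s v u) = g.B v ∧
        ∀ u, g.Adj v u → s v u ≠ 0 → ∀ u', g.Adj v u' → c v u' ≤ c v u) := by
  obtain ⟨p1, p2, p3⟩ := (valid_iff_row g s).1 hs v
  by_cases hex : ∃ u, g.Adj v u
  swap
  · simp only [hex, false_imp_iff, iff_true]
    intro t _
    have : ∀ u, aw g c v u = 0 := fun u => by
      unfold aw
      rw [if_neg fun k => hex ⟨u, k⟩]
    simp [this]
  simp only [hex, true_imp_iff]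
  have hadj : ∀ u, g.Adj v u → aw g c v u = c v u := fun u h => by simp [aw, h]
  have hnadj : ∀ u, ¬ g.Adj v u → aw g c v u = 0 := fun u h => by simp [aw, h]
  obtain ⟨u0, _, hmax⟩ := Finset.exists_max_image Finset.univ (aw g c v) ⟨v, Finset.mem_univ v⟩
  have hM : 0 < aw g c v u0 := by
    obtain ⟨u, hu⟩ := hex
    have := hmax u (Finset.mem_univ u)
    rw [hadj u hu] at this
    linarith [hc v u hu]
  have hu0 : g.Adj v u0 := by
    by_contra h
    rw [hnadj u0 h] at hM
    exact lt_irrefl _ hM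
  have bound : ∀ t, vrow g v t → ∑ u, aw g c v u * t u ≤ aw g c v u0 * ∑ u, t u := by
    intro t ht
    rw [Finset.mul_sum]
    exact Finset.sum_le_sum fun u _ => mul_le_mul_of_nonneg_right (hmax u (Finset.mem_univ u)) (ht.1 u)
  constructor
  · intro h
    have h1 := h (Pi.single u0 (g.B v)) ⟨fun u => by
        by_cases k : u = u0
        · subst k
          simpa using g.B_nonneg v
        · simp [k], fun u hu => by
        have k : u ≠ u0 := fun k => hu (k ▸ hu0)
        simp [k], by simp⟩
    have e : ∑ u, aw g c v u * (Pi.single u0 (g.B v) : V → ℝ) u = aw g c v u0 * g.B v := by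
      rw [Finset.sum_eq_single u0]
      · simp
      · intro u _ k
        simp [k]
      · simp
    rw [e] at h1
    have h2 := bound _ ⟨p1, p2, p3⟩
    have h3 : g.B v ≤ ∑ u, s v u := le_of_mul_le_mul_left (h1.trans h2) hM
    have h4 := le_antisymm p3 h3
    refine ⟨h4, ?_⟩
    have nn : ∀ u ∈ Finset.univ, 0 ≤ (aw g c v u0 - aw g c v u) * s v u := fun u hu =>
      mul_nonneg (sub_nonneg.2 (hmax u hu)) (p1 u)
    have h5 : ∑ u, (aw g c v u0 - aw g c v u) * s v u = 0 := by
      refine le_antisymm ?_ (Finset.sum_nonneg nn)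
      simp only [sub_mul, Finset.sum_sub_distrib]
      rw [← Finset.mul_sum, h4]
      linarith
    intro u hu hne u' hu'
    have h6 := (Finset.sum_eq_zero_iff_of_nonneg nn).1 h5 u (Finset.mem_univ u)
    have h7 := (mul_eq_zero.1 h6).resolve_right hne
    have h8 := hmax u' (Finset.mem_univ u')
    rw [hadj u' hu'] at h8
    rw [hadj u hu] at h7
    linarith
  · rintro ⟨h1, h2⟩ t ht
    have e : ∑ u, aw g c v u * s v u = aw g c v u0 * g.B v := by
      rw [← h1, Finset.mul_sum]
      refine Finset.sum_congr rfl fun u _ => ?_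
      by_cases k : s v u = 0
      · simp [k]
      · have hu : g.Adj v u := by
          by_contra hn
          exact k (p2 u hn)
        have := h2 u hu k u0 hu0
        rw [← hadj u hu, ← hadj u0 hu0] at this
        rw [le_antisymm (hmax u (Finset.mem_univ u)) this]
    rw [e]
    exact (bound t ht).trans (mul_le_mul_of_nonneg_left ht.2.2 hM.le)

/-- for reward functions `f_e(x,y) = c_e·(x+y)` with `c_e > 0`,
Nash equilibria are exactly the social optima (equivalently, the states where
every player with an incident edge spends its whole budget on incident edges of
maximal `c_e`); hence every pairwise equilibrium is a social optimum and the
price of anarchy for pairwise equilibria is 1. -/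
theorem linear_sum_rewards_nash_iff_optimal (g : NCGame V)
    (c : V → V → ℝ) (hc : ∀ u v, g.Adj u v → 0 < c u v)
    (hf : ∀ u v, g.Adj u v → ∀ x y, g.f u v x y = c u v * (x + y)) :
    (∀ s, validState g s →
      (IsNashEq g s ↔ ∀ s', validState g s' → welfare g s' ≤ welfare g s)) ∧
    (∀ s, validState g s →
      (IsNashEq g s ↔ ∀ v, (∃ u, g.Adj v u) →
        (∑ u, s v u) = g.B v ∧
        ∀ u, g.Adj v u → s v u ≠ 0 → ∀ u', g.Adj v u' → c v u' ≤ c v u)) ∧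
    (∀ s, IsPairwiseEq g s → ∀ s', validState g s' → welfare g s' ≤ welfare g s) := by
  have A : ∀ s, validState g s →
      (IsNashEq g s ↔ ∀ s', validState g s' → welfare g s' ≤ welfare g s) := fun s hs =>
    (nash_iff g c hf s hs).trans (opt_iff g c hf s hs).symm
  refine ⟨A, fun s hs => ?_, fun s h => (A s h.1.1).1 h.1⟩
  rw [nash_iff g c hf s hs]
  exact forall_congr' fun v => char_iff g c hc s hs v
end

section
/- Consider a network contribution game in which every reward function f_e belongs to class C and is continuous. Then there exists a social optimum that is tight. Moreover, if every reward function belongs to class C' (strictly coordinate-convex), then every social optimum is tight. -/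
open Finset

variable {V : Type} [Fintype V] [DecidableEq V]

theorem aux_simplex (P : V → Prop) (h : V → ℝ → ℝ) (B : ℝ) (t : V → ℝ)
    (ht0 : ∀ u, 0 ≤ t u) (htP : ∀ u, ¬ P u → t u = 0) (hB : ∑ u, t u ≤ B)
    (hmono : ∀ u, MonotoneOn (h u) (Set.Ici 0)) (hconv : ∀ u, ConvexOn ℝ (Set.Ici 0) (h u)) :
    ∃ t' : V → ℝ, (∀ u, t' u = 0 ∨ t' u = B) ∧ (∀ u, 0 ≤ t' u) ∧ (∀ u, ¬ P u → t' u = 0) ∧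
      (∑ u, t' u ≤ B) ∧ (∑ u, h u (t u) ≤ ∑ u, h u (t' u)) ∧
      ((∀ u, P u → StrictConvexOn ℝ (Set.Ici 0) (h u)) →
        (∃ u, t u ≠ 0 ∧ t u ≠ B) → ∑ u, h u (t u) < ∑ u, h u (t' u)) := by
  classical
  by_cases hall : ∀ u, t u = 0 ∨ t u = B
  · refine ⟨t, hall, ht0, htP, hB, le_rfl, ?_⟩
    rintro - ⟨u, h1, h2⟩
    rcases hall u with h | h
    · exact absurd h h1
    · exact absurd h h2
  push Not at hall
  obtain ⟨u0, hu0, hu0B⟩ := hall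
  have htle : ∀ u, t u ≤ B := fun u =>
    (Finset.single_le_sum (f := t) (fun i _ => ht0 i) (Finset.mem_univ u)).trans hB
  have hBpos : 0 < B := lt_of_lt_of_le (lt_of_le_of_ne (ht0 u0) (Ne.symm hu0)) (htle u0)
  have hP0 : P u0 := by
    by_contra hn
    exact hu0 (htP u0 hn)
  obtain ⟨w, hwmem, hw⟩ := Finset.exists_max_image (Finset.univ.filter P)
    (fun u => h u B - h u 0) ⟨u0, by simp [hP0]⟩
  have hPw : P w := by simpa using hwmem
  have hw' : ∀ u, P u → h u B - h u 0 ≤ h w B - h w 0 := fun u hu => hw u (by simp [hu])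
  set d := h w B - h w 0 with hd
  have hd0 : 0 ≤ d := sub_nonneg.2 (hmono w (by simp) (by simpa using hBpos.le) hBpos.le)
  have hcomb : ∀ u, (1 - t u / B) • (0:ℝ) + (t u / B) • B = t u := by
    intro u
    simp only [smul_eq_mul, mul_zero, zero_add]
    field_simp
  have hl1 : ∀ u, t u / B ≤ 1 := fun u => (div_le_one hBpos).2 (htle u)
  have hl0 : ∀ u, 0 ≤ t u / B := fun u => div_nonneg (ht0 u) hBpos.le
  have key1 : ∀ u, h u (t u) ≤ (1 - t u / B) * h u 0 + (t u / B) * h u B := by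
    intro u
    have := (hconv u).2 (show (0:ℝ) ∈ Set.Ici (0:ℝ) by simp) (show B ∈ Set.Ici (0:ℝ) from hBpos.le)
      (show 0 ≤ 1 - t u / B by linarith [hl1 u]) (hl0 u) (by ring)
    rw [hcomb u] at this
    simpa using this
  have key2 : ∀ u, (1 - t u / B) * h u 0 + (t u / B) * h u B ≤ h u 0 + (t u / B) * d := by
    intro u
    by_cases hu : P u
    · have := mul_le_mul_of_nonneg_left (hw' u hu) (hl0 u)
      linarith
    · simp [htP u hu]
  have hlast : ∑ u, (h u 0 + (t u / B) * d) ≤ ∑ u, h u ((Pi.single w B : V → ℝ) u) := by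
    have e1 : ∀ u, h u ((Pi.single w B : V → ℝ) u) = h u 0 + if u = w then d else 0 := by
      intro u
      by_cases hu : u = w
      · subst hu; simp [hd]
      · simp [hu]
    simp_rw [e1]
    rw [Finset.sum_add_distrib, Finset.sum_add_distrib, ← Finset.sum_mul, ← Finset.sum_div]
    have : (∑ u, t u) / B ≤ 1 := (div_le_one hBpos).2 hB
    simp only [Finset.sum_ite_eq', Finset.mem_univ, if_true]
    nlinarith
  refine ⟨Pi.single w B, ?_, ?_, ?_, ?_, ?_, ?_⟩
  · intro u
    by_cases hu : u = w
    · subst hu; simp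
    · simp [hu]
  · intro u
    by_cases hu : u = w
    · subst hu; simpa using hBpos.le
    · simp [hu]
  · intro u hn
    have : u ≠ w := by rintro rfl; exact hn hPw
    simp [this]
  · simp
  · exact (Finset.sum_le_sum fun u _ => (key1 u).trans (key2 u)).trans hlast
  · intro hs _
    refine lt_of_lt_of_le (Finset.sum_lt_sum (fun u _ => (key1 u).trans (key2 u))
      ⟨u0, Finset.mem_univ _, lt_of_lt_of_le ?_ (key2 u0)⟩) hlast
    have h1 : 0 < t u0 / B := div_pos (lt_of_le_of_ne (ht0 u0) (Ne.symm hu0)) hBpos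
    have h2 : t u0 / B < 1 := (div_lt_one hBpos).2 (lt_of_le_of_ne (htle u0) hu0B)
    have := (hs u0 hP0).2 (show (0:ℝ) ∈ Set.Ici (0:ℝ) by simp) (show B ∈ Set.Ici (0:ℝ) from hBpos.le) hBpos.ne
      (show 0 < 1 - t u0 / B by linarith) h1 (by ring)
    rw [hcomb u0] at this
    simpa using this

open Classical in
theorem aux_welfare (g : NCGame V) (s : V → V → ℝ) (v : V) (t : V → ℝ) :
    welfare g (Function.update s v t) - welfare g s =
      2 * (∑ u, (if g.Adj v u then g.f v u (t u) (s u v) else 0) -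
        ∑ u, (if g.Adj v u then g.f v u (s v u) (s u v) else 0)) := by
  have pt : ∀ a b, (if g.Adj a b then g.f a b (Function.update s v t a b)
        (Function.update s v t b a) else 0) - (if g.Adj a b then g.f a b (s a b) (s b a) else 0)
      = (if a = v then ((if g.Adj v b then g.f v b (t b) (s b v) else 0) -
          (if g.Adj v b then g.f v b (s v b) (s b v) else 0)) else 0) +
        (if b = v then ((if g.Adj v a then g.f v a (t a) (s a v) else 0) -
          (if g.Adj v a then g.f v a (s v a) (s a v) else 0)) else 0) := by
    intro a b
    have hirr := g.adj_irrefl v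
    by_cases ha : a = v
    · subst ha
      by_cases hb : b = a
      · subst hb; simp [hirr]
      · simp [hb]
    · by_cases hb : b = v
      · subst hb
        have hiff : g.Adj a b ↔ g.Adj b a := ⟨g.adj_symm _ _, g.adj_symm _ _⟩
        simp only [ha, hiff, if_true, if_false, zero_add, ne_eq, not_false_eq_true,
          Function.update_of_ne, Function.update_self]
        rw [g.f_comm a b, g.f_symm b a, g.f_comm a b, g.f_symm b a (s a b)]
      · simp [ha, hb]
  unfold welfare util
  rw [← Finset.sum_sub_distrib]
  simp_rw [← Finset.sum_sub_distrib, pt, Finset.sum_add_distrib]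
  rw [Finset.sum_comm]
  simp only [Finset.sum_ite_eq', Finset.mem_univ, if_true]
  ring

theorem aux_player (g : NCGame V) (hC : ∀ u v, g.Adj u v → InClassC (g.f u v))
    (s : V → V → ℝ) (hs : validState g s) (v : V) :
    ∃ t : V → ℝ, validState g (Function.update s v t) ∧ (∀ u, t u = 0 ∨ t u = g.B v) ∧
      welfare g s ≤ welfare g (Function.update s v t) ∧
      ((∀ u v, g.Adj u v → ∀ y, 0 ≤ y →
        StrictConvexOn ℝ (Set.Ici 0) (fun x => g.f u v x y)) →
        (∃ u, s v u ≠ 0 ∧ s v u ≠ g.B v) →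
        welfare g s < welfare g (Function.update s v t)) := by
  classical
  obtain ⟨hs0, hsA, hsB⟩ := hs
  obtain ⟨t, h1, h2, h3, h4, h5, h6⟩ := aux_simplex (g.Adj v)
    (fun u x => if g.Adj v u then g.f v u x (s u v) else 0) (g.B v) (s v) (hs0 v) (hsA v) (hsB v)
    (by
      intro u
      by_cases hu : g.Adj v u
      · simpa [hu] using (hC v u hu).2.2.1 _ (hs0 u v)
      · simpa [hu] using monotoneOn_const)
    (by
      intro u
      by_cases hu : g.Adj v u
      · simpa [hu] using (hC v u hu).2.2.2 _ (hs0 u v)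
      · simpa [hu] using convexOn_const (0:ℝ) (convex_Ici (0:ℝ)))
  have hw := aux_welfare g s v t
  refine ⟨t, ⟨?_, ?_, ?_⟩, h1, ?_, ?_⟩
  · intro a b
    by_cases ha : a = v
    · subst ha; simpa using h2 b
    · simpa [ha] using hs0 a b
  · intro a b
    by_cases ha : a = v
    · subst ha; simpa using h3 b
    · simpa [ha] using hsA a b
  · intro a
    by_cases ha : a = v
    · subst ha; simpa using h4
    · simpa [ha] using hsB a
  · linarith
  · intro hstr hex
    have := h6 (fun u hu => by simpa [hu] using hstr v u hu _ (hs0 u v)) hex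
    linarith

theorem aux_all (g : NCGame V) (hC : ∀ u v, g.Adj u v → InClassC (g.f u v))
    (s : V → V → ℝ) (hs : validState g s) (S : Finset V) :
    ∃ s', validState g s' ∧ welfare g s ≤ welfare g s' ∧
      ∀ v ∈ S, ∀ u, s' v u = 0 ∨ s' v u = g.B v := by
  induction S using Finset.induction_on with
  | empty => exact ⟨s, hs, le_rfl, by simp⟩
  | insert v S _ ih =>
    obtain ⟨s', h1, h2, h3⟩ := ih
    obtain ⟨t, k1, k2, k3, -⟩ := aux_player g hC s' h1 v
    refine ⟨_, k1, h2.trans k3, ?_⟩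
    intro a ha u
    by_cases hav : a = v
    · subst hav; simpa using k2 u
    · have : a ∈ S := by simpa [hav] using ha
      simpa [hav] using h3 a this u

/-- with continuous class-`C` rewards there exists a tight social
optimum; with class-`C'` (strictly coordinate-convex) rewards every social
optimum is tight. -/
theorem exists_tight_optimum (g : NCGame V)
    (hC : ∀ u v, g.Adj u v → InClassC (g.f u v))
    (hcont : ∀ u v, g.Adj u v →
      ContinuousOn (fun q : ℝ × ℝ => g.f u v q.1 q.2) (Set.Ici 0 ×ˢ Set.Ici 0)) :
    (∃ s, validState g s ∧ (∀ s', validState g s' → welfare g s' ≤ welfare g s) ∧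
      tightState g s) ∧
    ((∀ u v, g.Adj u v → ∀ y, 0 ≤ y →
        StrictConvexOn ℝ (Set.Ici 0) (fun x => g.f u v x y)) →
      ∀ s, validState g s → (∀ s', validState g s' → welfare g s' ≤ welfare g s) →
        tightState g s) := by
  refine ⟨?_, ?_⟩
  · have hfin : {s : V → V → ℝ | validState g s ∧ ∀ v u, s v u = 0 ∨ s v u = g.B v}.Finite := by
      refine Set.Finite.subset (Set.Finite.pi' (ι := V) (t := fun v =>
        {r : V → ℝ | ∀ u, r u ∈ ({0, g.B v} : Set ℝ)})
        (fun v => Set.Finite.pi' (fun _ => Set.toFinite _))) ?_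
      rintro s ⟨-, h⟩ v u
      simpa using h v u
    have hz : validState g (fun _ _ => 0) :=
      ⟨fun _ _ => le_rfl, fun _ _ _ => rfl, fun v => by simpa using g.B_nonneg v⟩
    obtain ⟨s, ⟨hs1, hs2⟩, hmax⟩ := Set.exists_max_image _ (welfare g) hfin
      ⟨_, hz, fun _ _ => Or.inl rfl⟩
    refine ⟨s, hs1, ?_, fun u v _ => hs2 u v⟩
    intro s' hs'
    obtain ⟨s'', h1, h2, h3⟩ := aux_all g hC s' hs' Finset.univ
    exact h2.trans (hmax s'' ⟨h1, fun v u => h3 v (Finset.mem_univ _) u⟩)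
  · intro hstr s hs hopt u v _
    by_contra hn
    push Not at hn
    obtain ⟨t, k1, -, -, k4⟩ := aux_player g hC s hs u
    exact absurd (k4 hstr ⟨v, hn⟩) (not_lt.2 (hopt _ k1))
end

section
/- Consider a network contribution game in which every reward function f_e belongs to class C and additionally has nondecreasing differences, i.e. f_e(x',y') − f_e(x,y') ≥ f_e(x',y) − f_e(x,y) whenever x ≤ x' and y ≤ y'. Then for every pairwise equilibrium s there exists a pairwise equilibrium s' with the same social welfare, w(s') = w(s), that has no slack edges. -/
open Finset

variable {V : Type} [Fintype V] [DecidableEq V]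

lemma core_real (f : ℝ → ℝ → ℝ) (hC : InClassC f)
    (hd : ∀ x x' y y', 0 ≤ x → x ≤ x' → 0 ≤ y → y ≤ y' →
      f x' y - f x y ≤ f x' y' - f x y')
    (p q x y : ℝ) (hx : 0 < x) (hxp : x < p) (hy : 0 < y) (hyq : y < q)
    (haff : p * f x y = x * f p y + (p - x) * f 0 y) (hle : f p q ≤ f p y) :
    f p q ≤ f 0 0 := by
  obtain ⟨-, hsym, hmono, hconv⟩ := hC
  have hp : 0 < p := hx.trans hxp
  have hq : 0 < q := hy.trans hyq
  have mono1 : ∀ a b c, 0 ≤ a → a ≤ b → 0 ≤ c → f a c ≤ f b c := fun a b c ha hab hc =>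
    hmono c hc (Set.mem_Ici.2 ha) (Set.mem_Ici.2 (ha.trans hab)) hab
  have mono2 : ∀ a b c, 0 ≤ a → a ≤ b → 0 ≤ c → f c a ≤ f c b := fun a b c ha hab hc => by
    rw [hsym c a, hsym c b]; exact mono1 a b c ha hab hc
  -- three point convexity
  have cvx : ∀ a b c d, 0 ≤ a → a < b → b < c → 0 ≤ d →
      (c - a) * f b d ≤ (c - b) * f a d + (b - a) * f c d := by
    intro a b c d ha hab hbc hd0
    have h := (hconv d hd0).2 (Set.mem_Ici.2 ha)
      (Set.mem_Ici.2 (ha.trans (hab.le.trans hbc.le)))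
      (show 0 ≤ (c - b) / (c - a) from div_nonneg (by linarith) (by linarith))
      (show 0 ≤ (b - a) / (c - a) from div_nonneg (by linarith) (by linarith))
      (by rw [← add_div]; rw [div_eq_one_iff_eq] <;> linarith)
    have hca : 0 < c - a := by linarith
    have e : ((c - b) / (c - a)) • a + ((b - a) / (c - a)) • c = b := by
      simp only [smul_eq_mul]; field_simp; ring
    simp only [e] at h
    simp only [smul_eq_mul] at h
    have h2 := mul_le_mul_of_nonneg_left h hca.le
    have e2 : (c - a) * ((c - b) / (c - a) * f a d + (b - a) / (c - a) * f c d)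
        = (c - b) * f a d + (b - a) * f c d := by field_simp
    linarith
  -- f p is constant on [0,q]
  have h1 : f p q ≤ f p 0 := by
    have h := cvx 0 y q p le_rfl hy hyq hp.le
    rw [hsym y p, hsym 0 p, hsym q p] at h
    have : q * f p q ≥ q * f p y := by
      have := mono2 y q p hy.le hyq.le hp.le
      nlinarith
    nlinarith
  have h2 : ∀ a, 0 ≤ a → a ≤ p → f a q ≤ f a 0 := by
    intro a ha hap
    have := hd a p 0 q ha hap le_rfl hq.le
    linarith
  have h3 : f q 0 ≤ f 0 0 := by
    rw [hsym q 0]; exact h2 0 le_rfl hp.le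
  have h4 : f (min p q) y ≤ f 0 0 := by
    have hm : 0 < min p q := lt_min hp hq
    calc f (min p q) y ≤ f (min p q) q := mono2 _ _ _ hy.le hyq.le hm.le
      _ ≤ f (min p q) 0 := h2 _ hm.le (min_le_left _ _)
      _ ≤ f q 0 := mono1 _ _ _ hm.le (min_le_right _ _) le_rfl
      _ ≤ f 0 0 := h3
  have h00 : f 0 0 ≤ f 0 y := mono2 _ _ _ le_rfl hy.le le_rfl
  have h0y : f 0 y ≤ f 0 0 := (mono2 _ _ _ hy.le hyq.le le_rfl).trans (h2 0 le_rfl hp.le)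
  have h5 : f x y ≤ f 0 y := by
    have hm : 0 < min p q := lt_min hp hq
    rcases le_or_gt x (min p q) with h | h
    · exact (mono1 _ _ _ hx.le h hy.le).trans (h4.trans h00)
    · have hc := cvx _ x p y hm.le h hxp hy.le
      set c := min p q
      have : (p - x) * f c y ≤ (p - x) * f 0 y :=
        mul_le_mul_of_nonneg_left (h4.trans h00) (by linarith)
      -- (p-c) φx ≤ (p-x) φ0 + (x-c) φp ;  p φx = x φp + (p-x) φ0
      have k : x * ((p - c) * f x y) ≤ x * ((p - x) * f 0 y + (x - c) * f p y) :=
        mul_le_mul_of_nonneg_left (by linarith) hx.le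
      have k2 : (x - c) * (p * f x y) = (x - c) * (x * f p y + (p - x) * f 0 y) := by rw [haff]
      have k3 : (c * (p - x)) * (f x y - f 0 y) ≤ 0 := by nlinarith
      have : 0 < c * (p - x) := mul_pos hm (by linarith)
      by_contra hcon
      have := mul_pos this (show 0 < f x y - f 0 y by linarith)
      linarith
  have h6 : f p y ≤ f 0 y := by
    have : x * f p y ≤ x * f 0 y := by nlinarith
    exact le_of_mul_le_mul_left this hx
  linarith

lemma valid_update_s6 (g : NCGame V) (s : V → V → ℝ) (hs : validState g s) (u : V) (t : V → ℝ)
    (h0 : ∀ w, 0 ≤ t w) (h1 : ∀ w, ¬ g.Adj u w → t w = 0) (h2 : ∑ w, t w ≤ g.B u) :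
    validState g (Function.update s u t) := by
  refine ⟨fun a b => ?_, fun a b => ?_, fun a => ?_⟩ <;> by_cases h : a = u
  · subst h; simpa using h0 b
  · simpa [h] using hs.1 a b
  · subst h; simpa using h1 b
  · simpa [h] using hs.2.1 a b
  · subst h; simpa using h2
  · simpa [h] using hs.2.2 a

lemma valid_allin (g : NCGame V) (s : V → V → ℝ) (hs : validState g s) (u v : V)
    (huv : g.Adj u v) : validState g (Function.update s u (Pi.single v (g.B u))) := by
  apply valid_update_s6 g s hs
  · intro w
    by_cases h : w = v
    · subst h; simpa using g.B_nonneg u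
    · simp [h]
  · intro w hw
    by_cases h : w = v
    · subst h; exact absurd huv hw
    · simp [h]
  · simp

open Classical in
lemma util_update (g : NCGame V) (s : V → V → ℝ) (u : V) (t : V → ℝ) :
    util g (Function.update s u t) u =
      ∑ w, if g.Adj u w then g.f u w (t w) (s w u) else 0 := by
  unfold util
  refine Finset.sum_congr rfl fun w _ => ?_
  by_cases h : g.Adj u w
  · have : w ≠ u := by rintro rfl; exact g.adj_irrefl _ h
    simp [h, this]
  · simp [h]

lemma allin_facts (g : NCGame V) (hC : ∀ u v, g.Adj u v → InClassC (g.f u v))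
    (s : V → V → ℝ) (hs : IsNashEq g s) (u v : V) (huv : g.Adj u v)
    (hx : 0 < s u v) (hxp : s u v < g.B u) :
    util g (Function.update s u (Pi.single v (g.B u))) u = util g s u ∧
    g.B u * g.f u v (s u v) (s v u) =
      s u v * g.f u v (g.B u) (s v u) + (g.B u - s u v) * g.f u v 0 (s v u) := by
  classical
  obtain ⟨hval, hN⟩ := hs
  set p := g.B u with hp
  set x := s u v with hxdef
  have hpx : 0 < p - x := by linarith
  have hp0 : 0 < p := by linarith
  let R : V → ℝ := fun w => if w = v then 0 else s u w * (p / (p - x))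
  have hR0 : ∀ w, 0 ≤ R w := by
    intro w
    by_cases h : w = v
    · simp [R, h]
    · simp only [R, h, if_false]
      exact mul_nonneg (hval.1 u w) (div_nonneg hp0.le hpx.le)
  have hRsum : ∑ w, R w ≤ g.B u := by
    have e1 : ∑ w, R w = (∑ w ∈ univ.erase v, s u w) * (p / (p - x)) := by
      rw [← Finset.add_sum_erase univ R (mem_univ v), Finset.sum_mul]
      simp only [R, if_true, zero_add]
      refine Finset.sum_congr rfl fun w hw => ?_
      rw [if_neg (Finset.ne_of_mem_erase hw)]
    have e2 := Finset.add_sum_erase univ (s u) (mem_univ v)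
    have e3 := hval.2.2 u
    have e4 : ∑ w ∈ univ.erase v, s u w ≤ p - x := by linarith
    rw [e1]
    calc _ ≤ (p - x) * (p / (p - x)) :=
          mul_le_mul_of_nonneg_right e4 (div_nonneg hp0.le hpx.le)
      _ = p := by field_simp
  have hRv : validState g (Function.update s u R) := by
    apply valid_update_s6 g s hval u R hR0 _ hRsum
    intro w hw
    by_cases h : w = v
    · simp [R, h]
    · simp [R, h, hval.2.1 u w hw]
  have hA := hN u _ (valid_allin g s hval u v huv)
  have hR := hN u R hRv
  have eA := util_update g s u (Pi.single v (g.B u))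
  have eR := util_update g s u R
  have eS : util g s u = ∑ w, if g.Adj u w then g.f u w (s u w) (s w u) else 0 := rfl
  set A : V → ℝ := Pi.single v (g.B u) with hAdef
  have hA0 : ∀ w, 0 ≤ A w := by
    intro w
    by_cases h : w = v
    · subst h; simpa [A] using g.B_nonneg u
    · simp [A, h]
  have hcomb : ∀ w, (x / p) * A w + ((p - x) / p) * R w = s u w := by
    intro w
    by_cases h : w = v
    · subst h; simp only [A, R, Pi.single_eq_same, if_true, ← hp]; field_simp; simp [hxdef, mul_comm]
    · simp only [A, R, h, if_false]; rw [Pi.single_eq_of_ne h]; field_simp; ring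
  have hterm : ∀ w ∈ (univ : Finset V),
      p * (if g.Adj u w then g.f u w (s u w) (s w u) else 0) ≤
      x * (if g.Adj u w then g.f u w (A w) (s w u) else 0) +
      (p - x) * (if g.Adj u w then g.f u w (R w) (s w u) else 0) := by
    intro w _
    by_cases h : g.Adj u w
    · simp only [h, if_true]
      have hc := ((hC u w h).2.2.2 (s w u) (hval.1 w u)).2 (Set.mem_Ici.2 (hA0 w))
        (Set.mem_Ici.2 (hR0 w))
        (div_nonneg hx.le hp0.le) (div_nonneg hpx.le hp0.le) (by rw [← add_div, div_eq_one_iff_eq hp0.ne']; ring)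
      simp only [smul_eq_mul, hcomb w] at hc
      have h2 := mul_le_mul_of_nonneg_left hc hp0.le
      refine h2.trans (le_of_eq ?_)
      field_simp
    · simp [h]
  have hsum := Finset.sum_le_sum hterm
  have hsum' := hsum
  rw [Finset.sum_add_distrib, ← Finset.mul_sum, ← Finset.mul_sum, ← Finset.mul_sum,
    ← eA, ← eR, ← eS] at hsum'
  have m1 := mul_le_mul_of_nonneg_left hA hx.le
  have m2 := mul_le_mul_of_nonneg_left hR hpx.le
  constructor
  · apply le_antisymm hA
    have : x * util g s u ≤ x * util g (Function.update s u A) u := by nlinarith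
    exact le_of_mul_le_mul_left this hx
  · have heq := (Finset.sum_eq_sum_iff_of_le hterm).1 (by
      apply le_antisymm hsum
      rw [Finset.sum_add_distrib, ← Finset.mul_sum, ← Finset.mul_sum, ← Finset.mul_sum,
        ← eA, ← eR, ← eS]
      nlinarith) v (mem_univ v)
    simpa [huv, A, R, ← hp, ← hxdef] using heq

lemma util_pair (g : NCGame V) (s : V → V → ℝ) (u v : V) (huv : g.Adj u v) (T : V → V → ℝ)
    (hTu : T u = Pi.single v (g.B u)) (hTv : T v u = g.B v)
    (hT : ∀ w, w ≠ u → w ≠ v → T w = s w) :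
    util g T u = util g (Function.update s u (Pi.single v (g.B u))) u +
      (g.f u v (g.B u) (g.B v) - g.f u v (g.B u) (s v u)) := by
  classical
  rw [util_update]
  unfold util
  rw [← Finset.add_sum_erase univ _ (mem_univ v),
    ← Finset.add_sum_erase univ (fun w => if g.Adj u w then
      g.f u w ((Pi.single v (g.B u) : V → ℝ) w) (s w u) else 0) (mem_univ v)]
  have : ∑ w ∈ univ.erase v, (if g.Adj u w then g.f u w (T u w) (T w u) else 0) =
      ∑ w ∈ univ.erase v, (if g.Adj u w then
        g.f u w ((Pi.single v (g.B u) : V → ℝ) w) (s w u) else 0) := by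
    refine Finset.sum_congr rfl fun w hw => ?_
    by_cases h : g.Adj u w
    · have hwu : w ≠ u := by rintro rfl; exact g.adj_irrefl _ h
      rw [hT w hwu (Finset.ne_of_mem_erase hw), hTu]
    · simp [h]
  rw [this]
  simp only [huv, if_true, hTu, hTv, Pi.single_eq_same]
  ring

lemma slack_le (g : NCGame V)
    (hC : ∀ u v, g.Adj u v → InClassC (g.f u v))
    (hdiff : ∀ u v, g.Adj u v → ∀ x x' y y', 0 ≤ x → x ≤ x' → 0 ≤ y → y ≤ y' →
      g.f u v x' y - g.f u v x y ≤ g.f u v x' y' - g.f u v x y')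
    (s : V → V → ℝ) (hs : IsPairwiseEq g s) (u v : V) (huv : g.Adj u v)
    (h1 : 0 < s u v) (h2 : s u v < g.B u) (h3 : 0 < s v u) (h4 : s v u < g.B v) :
    g.f u v (g.B u) (g.B v) ≤ g.f u v 0 0 := by
  have hne : u ≠ v := by rintro rfl; exact g.adj_irrefl _ huv
  have hvu := g.adj_symm _ _ huv
  obtain ⟨a1, a2⟩ := allin_facts g hC s hs.1 u v huv h1 h2
  obtain ⟨b1, b2⟩ := allin_facts g hC s hs.1 v u hvu h3 h4
  have hval := valid_allin g _ (valid_allin g s hs.1.1 u v huv) v u hvu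
  have hno := hs.2 u v _ _ hne hval
  have e1 := util_pair g s u v huv
    (Function.update (Function.update s u (Pi.single v (g.B u))) v (Pi.single u (g.B v)))
    (by simp [hne]) (by simp) (by intro w h h'; simp [h, h'])
  have e2 := util_pair g s v u hvu
    (Function.update (Function.update s u (Pi.single v (g.B u))) v (Pi.single u (g.B v)))
    (by simp) (by simp [hne]) (by intro w h h'; simp [h, h'])
  rw [e1, e2, a1, b1] at hno
  by_cases hc : g.f u v (g.B u) (g.B v) ≤ g.f u v (g.B u) (s v u)
  · exact core_real _ (hC u v huv) (hdiff u v huv) _ _ _ _ h1 h2 h3 h4 a2 hc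
  · have hc' : g.f v u (g.B v) (g.B u) ≤ g.f v u (g.B v) (s u v) := by
      by_contra hcc
      exact hno ⟨by linarith, by linarith⟩
    have := core_real _ (hC v u hvu) (hdiff v u hvu) _ _ _ _ h3 h4 h1 h2 b2 hc'
    rwa [g.f_comm v u, g.f_symm u v, g.f_comm v u] at this

lemma effort_le (g : NCGame V) (t : V → V → ℝ) (ht : validState g t) (u v : V) :
    t u v ≤ g.B u :=
  (Finset.single_le_sum (fun w _ => ht.1 u w) (mem_univ v)).trans (ht.2.2 u)

lemma slack_const (g : NCGame V) (u v : V)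
    (h : g.f u v (g.B u) (g.B v) ≤ g.f u v 0 0) (x y : ℝ) (hx : 0 ≤ x) (hxp : x ≤ g.B u)
    (hy : 0 ≤ y) (hyq : y ≤ g.B v) : g.f u v x y = g.f u v 0 0 := by
  have mono1 : ∀ a b c, 0 ≤ a → a ≤ b → 0 ≤ c → g.f u v a c ≤ g.f u v b c :=
    fun a b c ha hab hc =>
      g.f_mono u v c hc (Set.mem_Ici.2 ha) (Set.mem_Ici.2 (ha.trans hab)) hab
  have mono2 : ∀ a b c, 0 ≤ a → a ≤ b → 0 ≤ c → g.f u v c a ≤ g.f u v c b :=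
    fun a b c ha hab hc => by
      rw [g.f_symm u v c a, g.f_symm u v c b]; exact mono1 a b c ha hab hc
  apply le_antisymm
  · exact (mono1 _ _ _ hx hxp hy).trans ((mono2 _ _ _ hy hyq (g.B_nonneg u)).trans h)
  · exact (mono1 _ _ _ le_rfl hx le_rfl).trans (mono2 _ _ _ le_rfl hy hx)

/-- Two valid states differing only on edges with constant reward have equal utilities. -/
lemma util_eq_of (g : NCGame V) (t t' : V → V → ℝ) (ht : validState g t) (ht' : validState g t')
    (h : ∀ a b, g.Adj a b → (t a b = t' a b ∧ t b a = t' b a) ∨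
      g.f a b (g.B a) (g.B b) ≤ g.f a b 0 0) (v : V) : util g t v = util g t' v := by
  unfold util
  refine Finset.sum_congr rfl fun w _ => ?_
  by_cases hvw : g.Adj v w
  · simp only [hvw, if_true]
    rcases h v w hvw with ⟨h1, h2⟩ | h1
    · rw [h1, h2]
    · rw [slack_const g v w h1 _ _ (ht.1 v w) (effort_le g t ht v w) (ht.1 w v)
        (effort_le g t ht w v),
        slack_const g v w h1 _ _ (ht'.1 v w) (effort_le g t' ht' v w) (ht'.1 w v)
        (effort_le g t' ht' w v)]
  · simp [hvw]

lemma valid_swap (g : NCGame V) (s s' : V → V → ℝ) (hs : validState g s) (u : V) (t : V → ℝ)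
    (h : validState g (Function.update s' u t)) : validState g (Function.update s u t) := by
  apply valid_update_s6 g s hs
  · intro w; simpa using h.1 u w
  · intro w hw; simpa using h.2.1 u w hw
  · simpa using h.2.2 u

/-- with class-`C` rewards having nondecreasing differences, every
pairwise equilibrium can be transformed into one of the same social welfare
without slack edges. -/
theorem pairwise_eq_no_slack (g : NCGame V)
    (hC : ∀ u v, g.Adj u v → InClassC (g.f u v))
    (hdiff : ∀ u v, g.Adj u v → ∀ x x' y y', 0 ≤ x → x ≤ x' → 0 ≤ y → y ≤ y' →
      g.f u v x' y - g.f u v x y ≤ g.f u v x' y' - g.f u v x y')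
    (s : V → V → ℝ) (hs : IsPairwiseEq g s) :
    ∃ s', IsPairwiseEq g s' ∧ welfare g s' = welfare g s ∧
      ∀ u v, g.Adj u v →
        ¬(0 < s' u v ∧ s' u v < g.B u ∧ 0 < s' v u ∧ s' v u < g.B v) := by
  classical
  let sl : V → V → Prop := fun u v =>
    g.Adj u v ∧ 0 < s u v ∧ s u v < g.B u ∧ 0 < s v u ∧ s v u < g.B v
  have slsym : ∀ a b, sl a b → sl b a := fun a b ⟨h0, h1, h2, h3, h4⟩ =>
    ⟨g.adj_symm _ _ h0, h3, h4, h1, h2⟩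
  let s' : V → V → ℝ := fun u v => if sl u v then 0 else s u v
  have hval := hs.1.1
  have hle : ∀ a b, s' a b ≤ s a b := by
    intro a b
    by_cases h : sl a b
    · simpa [s', h] using hval.1 a b
    · simp [s', h]
  have hval' : validState g s' := by
    refine ⟨fun a b => ?_, fun a b hab => ?_, fun a => ?_⟩
    · by_cases h : sl a b
      · simp [s', h]
      · simpa [s', h] using hval.1 a b
    · by_cases h : sl a b
      · simp [s', h]
      · simpa [s', h] using hval.2.1 a b hab
    · exact (Finset.sum_le_sum fun b _ => hle a b).trans (hval.2.2 a)
  have hconst : ∀ a b, sl a b → g.f a b (g.B a) (g.B b) ≤ g.f a b 0 0 :=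
    fun a b ⟨h0, h1, h2, h3, h4⟩ => slack_le g hC hdiff s hs a b h0 h1 h2 h3 h4
  have key : ∀ t t' : V → V → ℝ, validState g t → validState g t' →
      (∀ a b, ¬ sl a b → t a b = t' a b) → ∀ v, util g t v = util g t' v := by
    intro t t' ht ht' h v
    refine util_eq_of g t t' ht ht' (fun a b _ => ?_) v
    by_cases hab : sl a b
    · exact Or.inr (hconst a b hab)
    · exact Or.inl ⟨h a b hab, h b a fun hh => hab (slsym _ _ hh)⟩
  have hss : ∀ a b, ¬ sl a b → s' a b = s a b := fun a b h => by simp [s', h]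
  have hupd : ∀ (r r' : V → V → ℝ) (u : V) (t : V → ℝ),
      (∀ a b, ¬ sl a b → r a b = r' a b) →
      ∀ a b, ¬ sl a b → Function.update r u t a b = Function.update r' u t a b := by
    intro r r' u t h a b hab
    by_cases hau : a = u
    · subst hau; simp
    · simpa [hau] using h a b hab
  have hu := key s' s hval' hval hss
  refine ⟨s', ⟨⟨hval', ?_⟩, ?_⟩, ?_, ?_⟩
  · intro v t ht
    have ht2 := valid_swap g s s' hval v t ht
    rw [hu, key _ _ ht ht2 (hupd _ _ v t hss)]
    exact hs.1.2 v t ht2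
  · intro u v tu tv huv ht
    have hmid : validState g (Function.update s u tu) := by
      apply valid_update_s6 g s hval
      · intro w; simpa [huv] using ht.1 u w
      · intro w hw; simpa [huv] using ht.2.1 u w hw
      · simpa [huv] using ht.2.2 u
    have ht2 := valid_swap g _ _ hmid v tv ht
    have k := key _ _ ht ht2 (hupd _ _ v tv (hupd _ _ u tu hss))
    rw [hu, hu, k, k]
    exact hs.2 u v tu tv huv ht2
  · exact Finset.sum_congr rfl fun v _ => hu v
  · rintro u v huv ⟨h1, h2, h3, h4⟩
    by_cases h : sl u v
    · simp [s', h] at h1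
    · have h' : ¬ sl v u := fun hh => h (slsym _ _ hh)
      rw [hss u v h] at h1 h2
      rw [hss v u h'] at h3 h4
      exact h ⟨huv, h1, h2, h3, h4⟩
end

section
/- If every reward function of a network contribution game belongs to class C, then every strict pairwise equilibrium — a pairwise equilibrium s in which, for every player v, the strategy s_v is the unique unilateral best response to the other players' strategies s_{−v} — is tight, i.e., every edge e=(u,v) satisfies s_u(e) ∈ {0, B_u} and s_v(e) ∈ {0, B_v}. -/
open Finset

variable {V : Type} [Fintype V] [DecidableEq V]

theorem aux_no_perturb (g : NCGame V)
    (hC : ∀ u v, g.Adj u v → InClassC (g.f u v))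
    (s : V → V → ℝ) (hv : validState g s)
    (hstrict : ∀ v (t : V → ℝ), validState g (Function.update s v t) →
      t ≠ s v → util g (Function.update s v t) v < util g s v)
    (u : V) (d : V → ℝ) (hd : d ≠ 0) (hab : ∀ w, |d w| ≤ s u w)
    (hsum : |∑ w, d w| ≤ g.B u - ∑ w, s u w) : False := by
  classical
  have key : ∀ e : V → ℝ, (∀ w, |e w| ≤ s u w) → |∑ w, e w| ≤ g.B u - ∑ w, s u w →
      validState g (Function.update s u (fun w => s u w + e w)) := by
    intro e he hes
    obtain ⟨h1, h2, h3⟩ := hv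
    refine ⟨fun v w => ?_, fun v w hvw => ?_, fun v => ?_⟩
    · by_cases h : v = u
      · subst h
        have := (abs_le.1 (he w)).1
        simp only [Function.update_self]; linarith
      · simpa [Function.update_of_ne h] using h1 v w
    · by_cases h : v = u
      · subst h
        have h0 := h2 v w hvw
        have h4 := he w
        rw [h0] at h4
        have := abs_nonpos_iff.1 h4
        simp [h0, this]
      · simpa [Function.update_of_ne h] using h2 v w hvw
    · by_cases h : v = u
      · subst h
        have := (abs_le.1 hes).2
        simp only [Function.update_self, Finset.sum_add_distrib]; linarith
      · simpa [Function.update_of_ne h] using h3 v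
  have ut : ∀ t : V → ℝ, util g (Function.update s u t) u =
      ∑ w, if g.Adj u w then g.f u w (t w) (s w u) else 0 := by
    intro t
    unfold util
    refine Finset.sum_congr rfl fun w _ => ?_
    by_cases h : g.Adj u w
    · have hne : w ≠ u := by
        rintro rfl; exact g.adj_irrefl _ h
      simp [h, Function.update_of_ne hne]
    · simp [h]
  have hp := hstrict u (fun w => s u w + d w) (key d hab hsum) (by
    intro h; apply hd; funext w
    have := congrFun h w
    simp only [Pi.zero_apply] at *; linarith)
  have hm := hstrict u (fun w => s u w + (- d) w) (key (-d) (by simpa using hab) (by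
      simpa [Finset.sum_neg_distrib] using hsum)) (by
    intro h; apply hd; funext w
    have := congrFun h w
    simp only [Pi.zero_apply, Pi.neg_apply] at *; linarith)
  rw [ut] at hp hm
  have hle : util g s u + util g s u ≤
      (∑ w, if g.Adj u w then g.f u w (s u w + d w) (s w u) else 0) +
      (∑ w, if g.Adj u w then g.f u w (s u w + (-d) w) (s w u) else 0) := by
    unfold util
    rw [← Finset.sum_add_distrib, ← Finset.sum_add_distrib]
    refine Finset.sum_le_sum fun w _ => ?_
    by_cases h : g.Adj u w
    · simp only [h, if_true]
      have hx : s u w + d w ∈ Set.Ici (0:ℝ) := by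
        have := (abs_le.1 (hab w)).1; simp only [Set.mem_Ici]; linarith
      have hy : s u w + (-d) w ∈ Set.Ici (0:ℝ) := by
        have := (abs_le.1 (hab w)).2; simp only [Set.mem_Ici, Pi.neg_apply]; linarith
      have hc := ((hC u w h).2.2.2 (s w u) (hv.1 w u)).2 hx hy
        (show (0:ℝ) ≤ 1/2 by norm_num) (show (0:ℝ) ≤ 1/2 by norm_num) (by norm_num)
      have e : (1/2 : ℝ) • (s u w + d w) + (1/2 : ℝ) • (s u w + (-d) w) = s u w := by
        simp only [smul_eq_mul, Pi.neg_apply]; ring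
      rw [e] at hc
      simp only [smul_eq_mul] at hc
      linarith
    · simp [h]
  linarith

/-- with class-`C` rewards, every strict pairwise equilibrium
(each player's strategy is its unique unilateral best response) is tight. -/
theorem classC_strict_pairwise_eq_tight (g : NCGame V)
    (hC : ∀ u v, g.Adj u v → InClassC (g.f u v))
    (s : V → V → ℝ) (hs : IsPairwiseEq g s)
    (hstrict : ∀ v (t : V → ℝ), validState g (Function.update s v t) →
      t ≠ s v → util g (Function.update s v t) v < util g s v) :
    tightState g s := by
  have hv := hs.1.1
  intro u v huv
  by_contra hcon
  push Not at hcon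
  obtain ⟨h0, hB⟩ := hcon
  have hpos : 0 < s u v := lt_of_le_of_ne (hv.1 u v) (Ne.symm h0)
  rcases lt_or_eq_of_le (hv.2.2 u) with hlt | heq
  · have hε : 0 < min (s u v) (g.B u - ∑ w, s u w) := lt_min hpos (by linarith)
    refine aux_no_perturb g hC s hv hstrict u
      (Pi.single v (min (s u v) (g.B u - ∑ w, s u w))) ?_ ?_ ?_
    · intro h
      have := congrFun h v
      simp only [Pi.single_eq_same, Pi.zero_apply] at this
      linarith
    · intro w
      by_cases h : w = v
      · subst h
        rw [Pi.single_eq_same, abs_of_pos hε]; exact min_le_left _ _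
      · rw [Pi.single_eq_of_ne h, abs_zero]; exact hv.1 u w
    · rw [Finset.sum_pi_single']
      simp only [Finset.mem_univ, if_true]
      rw [abs_of_pos hε]; exact min_le_right _ _
  · have hex : ∃ w, w ≠ v ∧ 0 < s u w := by
      by_contra hno
      push Not at hno
      apply hB
      rw [← heq]
      symm
      apply Finset.sum_eq_single v
      · intro w _ hw
        exact le_antisymm (hno w hw) (hv.1 u w)
      · intro h; exact absurd (Finset.mem_univ _) h
    obtain ⟨w, hwv, hw⟩ := hex
    have hε : 0 < min (s u v) (s u w) := lt_min hpos hw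
    refine aux_no_perturb g hC s hv hstrict u
      (Pi.single v (min (s u v) (s u w)) - Pi.single w (min (s u v) (s u w))) ?_ ?_ ?_
    · intro h
      have := congrFun h v
      simp only [Pi.sub_apply, Pi.single_eq_same, Pi.single_eq_of_ne hwv.symm, Pi.zero_apply] at this
      linarith
    · intro x
      rw [Pi.sub_apply]
      by_cases h : x = v
      · subst h
        rw [Pi.single_eq_same, Pi.single_eq_of_ne hwv.symm, sub_zero, abs_of_pos hε]
        exact min_le_left _ _
      · rw [Pi.single_eq_of_ne h]
        by_cases h' : x = w
        · subst h'
          rw [Pi.single_eq_same, zero_sub, abs_neg, abs_of_pos hε]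
          exact min_le_right _ _
        · rw [Pi.single_eq_of_ne h', sub_zero, abs_zero]; exact hv.1 u x
    · simp [Finset.sum_sub_distrib, heq]
end

section
/- Consider a network contribution game in which every reward function f_e : ℝ≥0 × ℝ≥0 → ℝ≥0 is concave (as a function of the pair (x,y)). Then every pairwise equilibrium s satisfies w(s*) ≤ 2·w(s) for every state s*; i.e., the price of anarchy for pairwise equilibria is at most 2. -/
open Finset

variable {V : Type} [Fintype V] [DecidableEq V]

noncomputable def ncInc (s r : V → V → ℝ) (v u : V) : ℝ := max 0 (r v u - s v u)

noncomputable def ncLam (s r : V → V → ℝ) (v u : V) : ℝ :=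
  ncInc s r v u / ∑ d, ncInc s r v d

open Classical in
noncomputable def ncLoss (g : NCGame V) (s r : V → V → ℝ) (v d : V) : ℝ :=
  if g.Adj v d ∧ r v d ≤ s v d then
    g.f v d (s v d) (s d v) - g.f v d (r v d) (s d v) else 0

noncomputable def ncDev (s r : V → V → ℝ) (v u : V) : V → ℝ := fun d =>
  if s v d < r v d then (if d = u then r v d else s v d)
  else s v d - ncLam s r v u * (s v d - r v d)

theorem ncInc_nonneg (s r : V → V → ℝ) (v u : V) : 0 ≤ ncInc s r v u := le_max_left _ _

theorem ncLam_nonneg (s r : V → V → ℝ) (v u : V) : 0 ≤ ncLam s r v u :=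
  div_nonneg (ncInc_nonneg _ _ _ _) (Finset.sum_nonneg fun _ _ => ncInc_nonneg _ _ _ _)

theorem ncLam_sum (s r : V → V → ℝ) (v : V) : ∑ u, ncLam s r v u ≤ 1 := by
  unfold ncLam
  rw [← Finset.sum_div]
  exact div_self_le_one _

theorem ncLam_le_one (s r : V → V → ℝ) (v u : V) : ncLam s r v u ≤ 1 :=
  (Finset.single_le_sum (f := fun u => ncLam s r v u)
    (fun _ _ => ncLam_nonneg _ _ _ _) (Finset.mem_univ u)).trans (ncLam_sum s r v)

theorem ncLam_mul (s r : V → V → ℝ) (v u : V) (h : s v u < r v u) :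
    ncLam s r v u * ∑ d, ncInc s r v d = ncInc s r v u := by
  have h1 : 0 < ncInc s r v u := lt_max_of_lt_right (by linarith)
  have h2 : 0 < ∑ d, ncInc s r v d := h1.trans_le
    (Finset.single_le_sum (f := fun u => ncInc s r v u)
    (fun _ _ => ncInc_nonneg _ _ _ _) (Finset.mem_univ u))
  exact div_mul_cancel₀ _ h2.ne'

theorem ncDev_nonneg (g : NCGame V) (s r : V → V → ℝ) (hs : validState g s)
    (hr : validState g r) (v u d : V) : 0 ≤ ncDev s r v u d := by
  have h1 := hs.1 v d
  have h2 := hr.1 v d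
  have h3 := ncLam_nonneg s r v u
  have h4 := ncLam_le_one s r v u
  unfold ncDev
  split_ifs with h h'
  · exact h2
  · exact h1
  · nlinarith

theorem ncDev_supp (g : NCGame V) (s r : V → V → ℝ) (hs : validState g s)
    (hr : validState g r) (v u d : V) (h : ¬ g.Adj v d) : ncDev s r v u d = 0 := by
  have h1 := hs.2.1 v d h
  have h2 := hr.2.1 v d h
  simp [ncDev, h1, h2]

theorem ncDev_sum (g : NCGame V) (s r : V → V → ℝ) (hs : validState g s)
    (hr : validState g r) (v u : V) (h : s v u < r v u) :
    ∑ d, ncDev s r v u d ≤ g.B v := by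
  have h1 := hs.2.2 v
  have h2 := hr.2.2 v
  have h3 := ncLam_nonneg s r v u
  have h4 := ncLam_le_one s r v u
  have h5 := ncLam_mul s r v u h
  have h6 : ∀ d, ncDev s r v u d = s v d + (if d = u then ncInc s r v u else 0)
      - ncLam s r v u * (ncInc s r v d - (r v d - s v d)) := by
    intro d
    unfold ncDev
    by_cases hd : d = u
    · subst hd
      have : ncInc s r v d = r v d - s v d := max_eq_right (by linarith)
      simp [h, this]
    · by_cases hh : s v d < r v d
      · have : ncInc s r v d = r v d - s v d := max_eq_right (by linarith)
        simp [hh, this, hd]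
      · have : ncInc s r v d = 0 := max_eq_left (by linarith)
        simp [hh, this, hd]
  rw [Finset.sum_congr rfl fun d _ => h6 d]
  rw [Finset.sum_sub_distrib, Finset.sum_add_distrib, ← Finset.mul_sum,
    Finset.sum_sub_distrib, Finset.sum_sub_distrib, Finset.sum_ite_eq' Finset.univ u]
  simp only [Finset.mem_univ, if_true]
  nlinarith

theorem validState_upd (g : NCGame V) (s : V → V → ℝ) (hs : validState g s) (v : V)
    (t : V → ℝ) (h1 : ∀ d, 0 ≤ t d) (h2 : ∀ d, ¬ g.Adj v d → t d = 0)
    (h3 : ∑ d, t d ≤ g.B v) : validState g (Function.update s v t) := by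
  refine ⟨fun w d => ?_, fun w d => ?_, fun w => ?_⟩ <;>
  by_cases hw : w = v
  · subst hw; simpa using h1 d
  · simpa [hw] using hs.1 w d
  · subst hw; simpa using h2 d
  · simpa [hw] using hs.2.1 w d
  · subst hw; simpa using h3
  · simpa [hw] using hs.2.2 w

theorem nc_fmono (g : NCGame V) (v u : V) {a b c d : ℝ} (ha : 0 ≤ a) (hc : 0 ≤ c)
    (hab : a ≤ b) (hcd : c ≤ d) : g.f v u a c ≤ g.f v u b d := by
  have h1 : g.f v u a c ≤ g.f v u b c := g.f_mono v u c hc ha (ha.trans hab) hab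
  have h2 : g.f v u c b ≤ g.f v u d b :=
    g.f_mono v u b (ha.trans hab) hc (hc.trans hcd) hcd
  rw [g.f_symm v u c, g.f_symm v u d] at h2
  exact h1.trans h2

theorem ncLoss_nonneg (g : NCGame V) (s r : V → V → ℝ) (hs : validState g s)
    (hr : validState g r) (v d : V) : 0 ≤ ncLoss g s r v d := by
  unfold ncLoss
  split_ifs with h
  · exact sub_nonneg.2 (nc_fmono g v d (hr.1 _ _) (hs.1 _ _) h.2 le_rfl)
  · exact le_rfl

theorem nc_util (g : NCGame V)
    (hconc : ∀ u v, g.Adj u v →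
      ConcaveOn ℝ (Set.Ici 0 ×ˢ Set.Ici 0) (fun q : ℝ × ℝ => g.f u v q.1 q.2))
    (s r : V → V → ℝ) (hs : validState g s) (hr : validState g r)
    (v u : V) (ha : g.Adj v u) (h : s v u < r v u) (s' : V → V → ℝ)
    (h1 : s' v = ncDev s r v u) (h2 : ∀ d, d ≠ u → d ≠ v → s' d v = s d v)
    (h3 : util g s' v ≤ util g s v) :
    g.f v u (r v u) (s' u v) - g.f v u (s v u) (s u v)
      ≤ ncLam s r v u * ∑ d, ncLoss g s r v d := by
  classical
  have key : ∀ d, (if d = u then g.f v u (r v u) (s' u v) - g.f v u (s v u) (s u v) else 0)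
      - ncLam s r v u * ncLoss g s r v d ≤
      (if g.Adj v d then g.f v d (s' v d) (s' d v) else 0)
      - (if g.Adj v d then g.f v d (s v d) (s d v) else 0) := by
    intro d
    by_cases hd : d = u
    · subst hd
      simp [ha, ncLoss, h, h.not_ge, h1, ncDev]
    · by_cases had : g.Adj v d
      · have hdv : d ≠ v := by rintro rfl; exact g.adj_irrefl _ had
        rw [h1, h2 d hd hdv]
        by_cases hi : s v d < r v d
        · simp [hd, had, ncLoss, hi, hi.not_ge, ncDev]
        · have hi' := not_lt.1 hi
          simp only [hd, had, ncLoss, hi, ncDev, hi', if_true, if_false, and_self]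
          have := (hconc v d had).2 (x := (s v d, s d v)) (y := (r v d, s d v))
            ⟨hs.1 _ _, hs.1 _ _⟩ ⟨hr.1 _ _, hs.1 _ _⟩
            (sub_nonneg.2 (ncLam_le_one s r v u)) (ncLam_nonneg s r v u) (by ring)
          simp only [Prod.smul_mk, Prod.mk_add_mk, smul_eq_mul] at this
          rw [show (1 - ncLam s r v u) * s v d + ncLam s r v u * r v d =
            s v d - ncLam s r v u * (s v d - r v d) by ring,
            show (1 - ncLam s r v u) * s d v + ncLam s r v u * s d v = s d v by ring] at this
          linarith
      · simp [hd, had, ncLoss]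
  have := Finset.sum_le_sum fun d (_ : d ∈ Finset.univ) => key d
  rw [Finset.sum_sub_distrib, Finset.sum_sub_distrib, ← Finset.mul_sum,
    Finset.sum_ite_eq' Finset.univ u] at this
  simp only [Finset.mem_univ, if_true] at this
  unfold util at h3
  linarith

theorem nc_one (g : NCGame V)
    (hconc : ∀ u v, g.Adj u v →
      ConcaveOn ℝ (Set.Ici 0 ×ˢ Set.Ici 0) (fun q : ℝ × ℝ => g.f u v q.1 q.2))
    (s r : V → V → ℝ) (hs : IsPairwiseEq g s) (hr : validState g r)
    (v u : V) (ha : g.Adj v u) (h : s v u < r v u) (h' : r u v ≤ s u v) :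
    g.f v u (r v u) (r u v) - g.f v u (s v u) (s u v)
      ≤ ncLam s r v u * ∑ d, ncLoss g s r v d := by
  have hv := hs.1.1
  have huv : u ≠ v := by rintro rfl; exact g.adj_irrefl _ ha
  have h3 := hs.1.2 v (ncDev s r v u) (validState_upd g s hv v _
    (ncDev_nonneg g s r hv hr v u) (ncDev_supp g s r hv hr v u) (ncDev_sum g s r hv hr v u h))
  have := nc_util g hconc s r hv hr v u ha h _ (by simp)
    (fun d _ hd => by simp [hd]) h3
  rw [Function.update_of_ne huv] at this
  have := nc_fmono g v u (hr.1 v u) (hr.1 u v) le_rfl h'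
  linarith

theorem nc_two (g : NCGame V)
    (hconc : ∀ u v, g.Adj u v →
      ConcaveOn ℝ (Set.Ici 0 ×ˢ Set.Ici 0) (fun q : ℝ × ℝ => g.f u v q.1 q.2))
    (s r : V → V → ℝ) (hs : IsPairwiseEq g s) (hr : validState g r)
    (v u : V) (ha : g.Adj v u) (h : s v u < r v u) (h' : s u v < r u v) :
    g.f v u (r v u) (r u v) - g.f v u (s v u) (s u v)
      ≤ ncLam s r v u * ∑ d, ncLoss g s r v d ∨
    g.f u v (r u v) (r v u) - g.f u v (s u v) (s v u)
      ≤ ncLam s r u v * ∑ d, ncLoss g s r u d := by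
  have hv := hs.1.1
  have huv : u ≠ v := by rintro rfl; exact g.adj_irrefl _ ha
  have h3 := hs.2 v u (ncDev s r v u) (ncDev s r u v) huv.symm (validState_upd g _
    (validState_upd g s hv v _
    (ncDev_nonneg g s r hv hr v u) (ncDev_supp g s r hv hr v u) (ncDev_sum g s r hv hr v u h)) u _
    (ncDev_nonneg g s r hv hr u v) (ncDev_supp g s r hv hr u v) (ncDev_sum g s r hv hr u v h'))
  rw [not_and_or, not_lt, not_lt] at h3
  rcases h3 with h3 | h3
  · left
    have := nc_util g hconc s r hv hr v u ha h _ (by simp [huv.symm])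
      (fun d hd hd' => by simp [hd, hd']) h3
    simpa [ncDev, h'] using this
  · right
    have := nc_util g hconc s r hv hr u v (g.adj_symm _ _ ha) h' _ (by simp)
      (fun d hd hd' => by simp [hd, hd']) h3
    simpa [ncDev, h, huv.symm] using this

theorem nc_edge (g : NCGame V)
    (hconc : ∀ u v, g.Adj u v →
      ConcaveOn ℝ (Set.Ici 0 ×ˢ Set.Ici 0) (fun q : ℝ × ℝ => g.f u v q.1 q.2))
    (s r : V → V → ℝ) (hs : IsPairwiseEq g s) (hr : validState g r)
    (v u : V) (ha : g.Adj v u) :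
    g.f v u (r v u) (r u v) + ncLoss g s r v u + ncLoss g s r u v ≤
      2 * g.f v u (s v u) (s u v) + ncLam s r v u * ∑ d, ncLoss g s r v d
      + ncLam s r u v * ∑ d, ncLoss g s r u d := by
  have hv := hs.1.1
  have ha' := g.adj_symm _ _ ha
  have sw : ∀ a b, g.f u v a b = g.f v u b a := fun a b => by rw [g.f_comm, g.f_symm]
  have p : ∀ a b, 0 ≤ ncLam s r a b * ∑ d, ncLoss g s r a d := fun a b =>
    mul_nonneg (ncLam_nonneg _ _ _ _) (Finset.sum_nonneg fun _ _ => ncLoss_nonneg g s r hv hr _ _)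
  have p1 := p v u
  have p2 := p u v
  have n1 := g.f_nonneg v u _ _ (hv.1 v u) (hv.1 u v)
  have n2 := g.f_nonneg v u _ _ (hr.1 v u) (hv.1 u v)
  have n3 := g.f_nonneg v u _ _ (hv.1 v u) (hr.1 u v)
  by_cases h : s v u < r v u <;> by_cases h' : s u v < r u v
  · have l1 : ncLoss g s r v u = 0 := by simp [ncLoss, h]
    have l2 : ncLoss g s r u v = 0 := by simp [ncLoss, h']
    have := nc_two g hconc s r hs hr v u ha h h'
    simp only [sw] at this
    rcases this with h | h <;> linarith
  · have l1 : ncLoss g s r v u = 0 := by simp [ncLoss, h]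
    have l2 : ncLoss g s r u v = g.f v u (s v u) (s u v) - g.f v u (s v u) (r u v) := by
      simp [ncLoss, not_lt.1 h', ha', sw]
    have := nc_one g hconc s r hs hr v u ha h (not_lt.1 h')
    linarith
  · have l1 : ncLoss g s r v u = g.f v u (s v u) (s u v) - g.f v u (r v u) (s u v) := by
      simp [ncLoss, not_lt.1 h, ha]
    have l2 : ncLoss g s r u v = 0 := by simp [ncLoss, h']
    have := nc_one g hconc s r hs hr u v ha' h' (not_lt.1 h)
    simp only [sw] at this
    linarith
  · have l1 : ncLoss g s r v u = g.f v u (s v u) (s u v) - g.f v u (r v u) (s u v) := by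
      simp [ncLoss, not_lt.1 h, ha]
    have l2 : ncLoss g s r u v = g.f v u (s v u) (s u v) - g.f v u (s v u) (r u v) := by
      simp [ncLoss, not_lt.1 h', ha', sw]
    have := nc_fmono g v u (hr.1 v u) (hr.1 u v) le_rfl (not_lt.1 h')
    linarith

/-- with concave rewards (jointly concave on the nonnegative
quadrant), the price of anarchy for pairwise equilibria is at most 2. -/
theorem poa_concave_le_two (g : NCGame V)
    (hconc : ∀ u v, g.Adj u v →
      ConcaveOn ℝ (Set.Ici 0 ×ˢ Set.Ici 0) (fun q : ℝ × ℝ => g.f u v q.1 q.2))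
    (s : V → V → ℝ) (hs : IsPairwiseEq g s)
    (sStar : V → V → ℝ) (hStar : validState g sStar) :
    welfare g sStar ≤ 2 * welfare g s := by
  classical
  have hv := hs.1.1
  have key : ∀ v u, (if g.Adj v u then g.f v u (sStar v u) (sStar u v) else 0)
      + ncLoss g s sStar v u + ncLoss g s sStar u v ≤
      2 * (if g.Adj v u then g.f v u (s v u) (s u v) else 0)
      + ncLam s sStar v u * ∑ d, ncLoss g s sStar v d
      + ncLam s sStar u v * ∑ d, ncLoss g s sStar u d := by
    intro v u
    by_cases ha : g.Adj v u
    · simpa [ha] using nc_edge g hconc s sStar hs hStar v u ha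
    · have ha' : ¬ g.Adj u v := fun h => ha (g.adj_symm _ _ h)
      have p : ∀ a b, 0 ≤ ncLam s sStar a b * ∑ d, ncLoss g s sStar a d := fun a b =>
        mul_nonneg (ncLam_nonneg _ _ _ _)
          (Finset.sum_nonneg fun _ _ => ncLoss_nonneg g s sStar hv hStar _ _)
      have p1 := p v u
      have p2 := p u v
      have l1 : ncLoss g s sStar v u = 0 := by simp [ncLoss, ha]
      have l2 : ncLoss g s sStar u v = 0 := by simp [ncLoss, ha']
      rw [l1, l2]
      simp only [ha, if_false]
      linarith
  have hsum := Finset.sum_le_sum fun v (_ : v ∈ Finset.univ) =>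
    Finset.sum_le_sum fun u (_ : u ∈ Finset.univ) => key v u
  simp only [Finset.sum_add_distrib, ← Finset.mul_sum] at hsum
  have e1 : ∑ v, ∑ u, ncLoss g s sStar u v = ∑ v, ∑ u, ncLoss g s sStar v u :=
    Finset.sum_comm
  have e2 : ∑ v, ∑ u, ncLam s sStar u v * ∑ d, ncLoss g s sStar u d
      = ∑ v, ∑ u, ncLam s sStar v u * ∑ d, ncLoss g s sStar v d :=
    Finset.sum_comm
  have e3 : ∑ v, ∑ u, ncLam s sStar v u * ∑ d, ncLoss g s sStar v d
      ≤ ∑ v, ∑ u, ncLoss g s sStar v u := by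
    refine Finset.sum_le_sum fun v _ => ?_
    rw [← Finset.sum_mul]
    exact mul_le_of_le_one_left
      (Finset.sum_nonneg fun _ _ => ncLoss_nonneg g s sStar hv hStar _ _) (ncLam_sum s sStar v)
  unfold welfare util
  linarith
end

section
/- Consider a network contribution game in which every reward function f_e is coordinate-concave, i.e., for every fixed value of one argument, f_e is a concave function of the other argument. Then every pairwise equilibrium s satisfies w(s*) ≤ 2·w(s) for every state s*; i.e., the price of anarchy for pairwise equilibria is at most 2. -/
open Finset

variable {V : Type} [Fintype V] [DecidableEq V]

section Aux

noncomputable def auxDel (s r : V → V → ℝ) (u v : V) : ℝ := max (s u v) (r u v) - s u v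
noncomputable def auxDec (s r : V → V → ℝ) (u v : V) : ℝ := s u v - min (s u v) (r u v)
noncomputable def auxLam (s r : V → V → ℝ) (u v : V) : ℝ :=
  auxDel s r u v / ∑ x, auxDel s r u x
noncomputable def auxT (s r : V → V → ℝ) (u v x : V) : ℝ :=
  s u x - auxLam s r u v * auxDec s r u x + if x = v then auxDel s r u v else 0

open Classical in
noncomputable def auxF (g : NCGame V) (s : V → V → ℝ) (u v : V) : ℝ :=
  if g.Adj u v then g.f u v (s u v) (s v u) else 0
open Classical in
noncomputable def auxG (g : NCGame V) (s r : V → V → ℝ) (u v : V) : ℝ :=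
  if g.Adj u v then g.f u v (max (s u v) (r u v)) (max (s v u) (r v u))
    - g.f u v (s u v) (s v u) else 0
open Classical in
noncomputable def auxL (g : NCGame V) (s r : V → V → ℝ) (u v : V) : ℝ :=
  if g.Adj u v then g.f u v (s u v) (s v u)
    - g.f u v (min (s u v) (r u v)) (s v u) else 0

lemma auxDel_nonneg (s r : V → V → ℝ) (u v : V) : 0 ≤ auxDel s r u v := by
  unfold auxDel; linarith [le_max_left (s u v) (r u v)]

lemma auxDec_nonneg (s r : V → V → ℝ) (u v : V) : 0 ≤ auxDec s r u v := by
  unfold auxDec; linarith [min_le_left (s u v) (r u v)]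

lemma auxLam_nonneg (s r : V → V → ℝ) (u v : V) : 0 ≤ auxLam s r u v :=
  div_nonneg (auxDel_nonneg s r u v) (Finset.sum_nonneg fun x _ => auxDel_nonneg s r u x)

lemma auxLam_sum (s r : V → V → ℝ) (u : V) : ∑ v, auxLam s r u v ≤ 1 := by
  unfold auxLam
  rw [← Finset.sum_div]
  exact div_self_le_one _

lemma auxLam_le (s r : V → V → ℝ) (u v : V) : auxLam s r u v ≤ 1 :=
  (Finset.single_le_sum (fun x _ => auxLam_nonneg s r u x) (Finset.mem_univ v)).trans
    (auxLam_sum s r u)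

lemma auxLam_mul (s r : V → V → ℝ) (u v : V) :
    auxLam s r u v * ∑ x, auxDel s r u x = auxDel s r u v := by
  unfold auxLam
  by_cases h : ∑ x, auxDel s r u x = 0
  · have := (Finset.sum_eq_zero_iff_of_nonneg (fun x _ => auxDel_nonneg s r u x)).1 h v
      (Finset.mem_univ v)
    rw [h, this]; simp
  · field_simp

lemma auxLam_dec (s r : V → V → ℝ) (u v : V) :
    auxLam s r u v * auxDec s r u v = 0 := by
  rcases le_total (s u v) (r u v) with h | h
  · simp [auxDec, h]
  · simp [auxLam, auxDel, h]

lemma auxT_self (s r : V → V → ℝ) (u v : V) :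
    auxT s r u v v = max (s u v) (r u v) := by
  unfold auxT
  rw [auxLam_dec]; simp [auxDel]

lemma auxT_nonneg (s r : V → V → ℝ) (hs : ∀ u v, 0 ≤ s u v) (hr : ∀ u v, 0 ≤ r u v)
    (u v x : V) : 0 ≤ auxT s r u v x := by
  have h1 := auxLam_le s r u v
  have h0 := auxLam_nonneg s r u v
  have h2 : auxDec s r u x ≤ s u x := by
    unfold auxDec; linarith [le_min (hs u x) (hr u x)]
  have h3 := auxDec_nonneg s r u x
  have h4 : 0 ≤ if x = v then auxDel s r u v else 0 := by
    split_ifs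
    · exact auxDel_nonneg s r u v
    · exact le_rfl
  unfold auxT
  nlinarith

lemma auxT_sum (s r : V → V → ℝ) (u v : V) (b : ℝ) (hs : ∑ x, s u x ≤ b)
    (hr : ∑ x, r u x ≤ b) : ∑ x, auxT s r u v x ≤ b := by
  have h1 := auxLam_le s r u v
  have h0 := auxLam_nonneg s r u v
  have e : ∑ x, r u x = ∑ x, s u x + ∑ x, auxDel s r u x - ∑ x, auxDec s r u x := by
    rw [← Finset.sum_add_distrib, ← Finset.sum_sub_distrib]
    refine Finset.sum_congr rfl fun x _ => ?_
    unfold auxDel auxDec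
    linarith [max_add_min (s u x) (r u x)]
  have e2 : ∑ x, auxT s r u v x
      = ∑ x, s u x - auxLam s r u v * ∑ x, auxDec s r u x + auxDel s r u v := by
    unfold auxT
    rw [Finset.sum_add_distrib, Finset.sum_sub_distrib, ← Finset.mul_sum]
    simp
  rw [e2, ← auxLam_mul s r u v]
  nlinarith

lemma aux_valid (g : NCGame V) (s r : V → V → ℝ) (hs : validState g s) (hr : validState g r)
    (u v : V) (huv : g.Adj u v) : validState g
      (Function.update (Function.update s u (auxT s r u v)) v (auxT s r v u)) := by
  have key : ∀ a b, g.Adj a b → ∀ x, ¬ g.Adj a x → auxT s r a b x = 0 := by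
    intro a b hab x hx
    have : x ≠ b := by rintro rfl; exact hx hab
    simp [auxT, auxDec, hs.2.1 a x hx, hr.2.1 a x hx, this]
  have hvu := g.adj_symm _ _ huv
  refine ⟨fun a x => ?_, fun a x hx => ?_, fun a => ?_⟩
  all_goals
    by_cases h1 : a = v
    · subst h1
      simp only [Function.update_self]
      first
        | exact auxT_nonneg s r hs.1 hr.1 _ _ _
        | exact key _ _ hvu _ hx
        | exact auxT_sum s r _ _ _ (hs.2.2 _) (hr.2.2 _)
    · rw [Function.update_of_ne h1]
      by_cases h2 : a = u
      · subst h2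
        simp only [Function.update_self]
        first
          | exact auxT_nonneg s r hs.1 hr.1 _ _ _
          | exact key _ _ huv _ hx
          | exact auxT_sum s r _ _ _ (hs.2.2 _) (hr.2.2 _)
      · rw [Function.update_of_ne h2]
        first
          | exact hs.1 _ _
          | exact hs.2.1 _ _ hx
          | exact hs.2.2 _

lemma auxL_nonneg (g : NCGame V) (s r : V → V → ℝ) (hs : ∀ u v, 0 ≤ s u v)
    (hr : ∀ u v, 0 ≤ r u v) (u v : V) : 0 ≤ auxL g s r u v := by
  unfold auxL
  split_ifs
  · have := g.f_mono u v (s v u) (hs v u) (Set.mem_Ici.2 (le_min (hs u v) (hr u v)))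
      (Set.mem_Ici.2 (hs u v)) (min_le_left _ _)
    simp only at this
    linarith
  · exact le_rfl

lemma aux_util (g : NCGame V)
    (hconc : ∀ u v, g.Adj u v → ∀ y, 0 ≤ y →
      ConcaveOn ℝ (Set.Ici 0) (fun x => g.f u v x y))
    (s r q : V → V → ℝ) (hs : ∀ u v, 0 ≤ s u v) (hr : ∀ u v, 0 ≤ r u v)
    (u v : V) (huv : g.Adj u v) (hqu : q u = auxT s r u v)
    (hqv : q v u = max (s v u) (r v u)) (hq : ∀ x, x ≠ u → x ≠ v → q x = s x) :
    util g s u + auxG g s r u v - auxLam s r u v * ∑ x, auxL g s r u x ≤ util g q u := by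
  have e : util g s u + auxG g s r u v - auxLam s r u v * ∑ x, auxL g s r u x
      = ∑ x, (auxF g s u x + (if x = v then auxG g s r u v else 0)
        - auxLam s r u v * auxL g s r u x) := by
    rw [Finset.sum_sub_distrib, Finset.sum_add_distrib, ← Finset.mul_sum]
    simp [util, auxF]
  rw [e]
  unfold util
  refine Finset.sum_le_sum fun x _ => ?_
  have h1 := auxLam_le s r u v
  have h0 := auxLam_nonneg s r u v
  have hL := auxL_nonneg g s r hs hr u x
  by_cases hxv : x = v
  · subst hxv
    have : 0 ≤ auxLam s r u x * auxL g s r u x := mul_nonneg h0 hL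
    simp only [if_true, huv, auxF, auxG]
    rw [hqv, hqu, auxT_self]
    linarith
  · by_cases hx : g.Adj u x
    · have hxu : x ≠ u := by rintro rfl; exact g.adj_irrefl _ hx
      simp only [hxv, hx, if_true, if_false, auxF, auxL]
      rw [hq x hxu hxv, hqu]
      have := (hconc u x hx (s x u) (hs x u)).2 (Set.mem_Ici.2 (hs u x))
        (Set.mem_Ici.2 (le_min (hs u x) (hr u x))) (sub_nonneg.2 h1) h0 (by ring)
      simp only [smul_eq_mul] at this
      have e3 : auxT s r u v x = (1 - auxLam s r u v) * s u x
          + auxLam s r u v * min (s u x) (r u x) := by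
        simp [auxT, hxv, auxDec]; ring
      rw [e3]
      linarith
    · simp [hxv, hx, auxF, auxL]

lemma auxG_symm (g : NCGame V) (s r : V → V → ℝ) (u v : V) :
    auxG g s r u v = auxG g s r v u := by
  unfold auxG
  by_cases h : g.Adj u v
  · have h' := g.adj_symm _ _ h
    simp only [h, h', if_true]
    rw [g.f_comm u v, g.f_symm v u, g.f_comm u v, g.f_symm v u (s u v)]
  · have h' : ¬ g.Adj v u := fun h' => h (g.adj_symm _ _ h')
    simp [h, h']

lemma aux_G_le (g : NCGame V)
    (hconc : ∀ u v, g.Adj u v → ∀ y, 0 ≤ y →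
      ConcaveOn ℝ (Set.Ici 0) (fun x => g.f u v x y))
    (s r : V → V → ℝ) (hs : IsPairwiseEq g s) (hr : validState g r) (u v : V) :
    auxG g s r u v ≤ auxLam s r u v * ∑ x, auxL g s r u x
      + auxLam s r v u * ∑ x, auxL g s r v x := by
  have hv := hs.1.1
  have n1 : 0 ≤ auxLam s r u v * ∑ x, auxL g s r u x :=
    mul_nonneg (auxLam_nonneg _ _ _ _)
      (Finset.sum_nonneg fun x _ => auxL_nonneg g s r hv.1 hr.1 u x)
  have n2 : 0 ≤ auxLam s r v u * ∑ x, auxL g s r v x :=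
    mul_nonneg (auxLam_nonneg _ _ _ _)
      (Finset.sum_nonneg fun x _ => auxL_nonneg g s r hv.1 hr.1 v x)
  by_cases huv : g.Adj u v
  · have hne : u ≠ v := by rintro rfl; exact g.adj_irrefl _ huv
    have hvu := g.adj_symm _ _ huv
    by_contra hcon
    push Not at hcon
    refine hs.2 u v (auxT s r u v) (auxT s r v u) hne (aux_valid g s r hv hr u v huv) ⟨?_, ?_⟩
    · have := aux_util g hconc s r
        (Function.update (Function.update s u (auxT s r u v)) v (auxT s r v u))
        hv.1 hr.1 u v huv (by simp [hne]) (by simp [auxT_self])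
        (fun x h1 h2 => by simp [h1, h2])
      linarith
    · have := aux_util g hconc s r
        (Function.update (Function.update s u (auxT s r u v)) v (auxT s r v u))
        hv.1 hr.1 v u hvu (by simp) (by simp [hne, auxT_self])
        (fun x h1 h2 => by simp [h1, h2])
      rw [auxG_symm] at hcon
      linarith
  · have : auxG g s r u v = 0 := by simp [auxG, huv]
    linarith

lemma aux_edge_s10 (g : NCGame V) (s r : V → V → ℝ) (hs : ∀ u v, 0 ≤ s u v)
    (hr : ∀ u v, 0 ≤ r u v) (u v : V) :
    auxF g r u v + auxL g s r u v + auxL g s r v u ≤ auxG g s r u v + 2 * auxF g s u v := by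
  by_cases h : g.Adj u v
  · have h' := g.adj_symm _ _ h
    have mono : ∀ a b c d, 0 ≤ a → 0 ≤ b → a ≤ c → b ≤ d → g.f u v a b ≤ g.f u v c d := by
      intro a b c d ha hb hac hbd
      have h1 := g.f_mono u v b hb (Set.mem_Ici.2 ha) (Set.mem_Ici.2 (ha.trans hac)) hac
      have h2 := g.f_mono u v c (ha.trans hac) (Set.mem_Ici.2 hb)
        (Set.mem_Ici.2 (hb.trans hbd)) hbd
      simp only at h1 h2
      rw [g.f_symm u v b c, g.f_symm u v d c] at h2
      exact h1.trans h2
    simp only [auxF, auxG, auxL, h, h', if_true]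
    rw [g.f_comm v u, g.f_symm u v (s v u), g.f_comm v u, g.f_symm u v (min (s v u) _)]
    have a1 := hs u v
    have a2 := hs v u
    have a3 := hr u v
    have a4 := hr v u
    rcases le_total (s u v) (r u v) with c1 | c1 <;> rcases le_total (s v u) (r v u) with c2 | c2
    · simp only [max_eq_right c1, max_eq_right c2, min_eq_left c1, min_eq_left c2]
      linarith [g.f_nonneg u v _ _ a1 a2]
    · simp only [max_eq_right c1, max_eq_left c2, min_eq_left c1, min_eq_right c2]
      linarith [g.f_nonneg u v _ _ a1 a4, mono _ _ _ _ a3 a4 le_rfl c2]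
    · simp only [max_eq_left c1, max_eq_right c2, min_eq_right c1, min_eq_left c2]
      linarith [g.f_nonneg u v _ _ a3 a2, mono _ _ _ _ a3 a4 c1 le_rfl]
    · simp only [max_eq_left c1, max_eq_left c2, min_eq_right c1, min_eq_right c2]
      linarith [g.f_nonneg u v _ _ a1 a4, mono _ _ _ _ a3 a4 le_rfl c2]
  · have h' : ¬ g.Adj v u := fun h' => h (g.adj_symm _ _ h')
    simp [auxF, auxG, auxL, h, h']

end Aux

/-- with coordinate-concave rewards, the price of anarchy for
pairwise equilibria is at most 2. -/
theorem poa_coordinate_concave_le_two (g : NCGame V)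
    (hconc : ∀ u v, g.Adj u v → ∀ y, 0 ≤ y →
      ConcaveOn ℝ (Set.Ici 0) (fun x => g.f u v x y))
    (s : V → V → ℝ) (hs : IsPairwiseEq g s)
    (sStar : V → V → ℝ) (hStar : validState g sStar) :
    welfare g sStar ≤ 2 * welfare g s := by
  have hv := hs.1.1
  have w : ∀ q, welfare g q = ∑ u, ∑ v, auxF g q u v := fun q => rfl
  have e1 := Finset.sum_le_sum fun u (_ : u ∈ Finset.univ) =>
    Finset.sum_le_sum fun v (_ : v ∈ Finset.univ) => aux_edge_s10 g s sStar hv.1 hStar.1 u v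
  have e2 := Finset.sum_le_sum fun u (_ : u ∈ Finset.univ) =>
    Finset.sum_le_sum fun v (_ : v ∈ Finset.univ) => aux_G_le g hconc s sStar hs hStar u v
  simp only [Finset.sum_add_distrib, ← Finset.mul_sum] at e1 e2
  have c1 : ∑ u, ∑ v, auxL g s sStar v u = ∑ u, ∑ v, auxL g s sStar u v := Finset.sum_comm
  have c2 : ∑ u, ∑ v, auxLam s sStar v u * ∑ x, auxL g s sStar v x
      = ∑ u, ∑ v, auxLam s sStar u v * ∑ x, auxL g s sStar u x := Finset.sum_comm
  have c3 : ∑ u, ∑ v, auxLam s sStar u v * ∑ x, auxL g s sStar u x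
      ≤ ∑ u, ∑ v, auxL g s sStar u v := by
    refine Finset.sum_le_sum fun u _ => ?_
    rw [← Finset.sum_mul]
    exact mul_le_of_le_one_left
      (Finset.sum_nonneg fun x _ => auxL_nonneg g s sStar hv.1 hStar.1 u x)
      (auxLam_sum s sStar u)
  rw [w, w]
  linarith
end

section
/- Consider a minimum effort game with uniform budgets (B_v = 1 for every player v) in which every function h_e is convex. Then a pairwise equilibrium exists. Moreover, if every h_e is strictly convex, then every pairwise equilibrium s is integral: for every edge e = (u,v), min(s_u(e), s_v(e)) ∈ {0, 1}. -/
open Finset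

variable {V : Type} [Fintype V] [DecidableEq V]

theorem stable_aux {V : Type} [Fintype V] [DecidableEq V] (W : V → V → ℝ)
    (hW : ∀ u v, W u v = W v u) (n : ℕ) : ∀ S : Finset V, S.card ≤ n →
    ∃ m : V → V, (∀ x, m (m x) = x) ∧ (∀ x, x ∉ S → m x = x) ∧
      ∀ u ∈ S, ∀ v ∈ S, W u v ≤ W u (m u) ∨ W u v ≤ W v (m v) := by
  induction n with
  | zero =>
    intro S hS
    have : S = ∅ := by simpa using hS
    subst this
    exact ⟨id, by simp, by simp, by simp⟩
  | succ n ih =>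
    intro S hS
    rcases S.eq_empty_or_nonempty with rfl | hne
    · exact ⟨id, by simp, by simp, by simp⟩
    obtain ⟨⟨a, b⟩, hab, hmax⟩ := Finset.exists_max_image (S ×ˢ S) (fun p => W p.1 p.2)
      (hne.product hne)
    rw [Finset.mem_product] at hab
    obtain ⟨ha, hb⟩ := hab
    simp only at ha hb
    have hm : ∀ u ∈ S, ∀ v ∈ S, W u v ≤ W a b := fun u hu v hv =>
      hmax (u, v) (Finset.mem_product.2 ⟨hu, hv⟩)
    have hc : ((S.erase a).erase b).card ≤ n := by
      have h1 : (S.erase a).card < S.card := Finset.card_erase_lt_of_mem ha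
      have h2 := Finset.card_erase_le (s := S.erase a) (a := b)
      omega
    obtain ⟨m, hinv, hfix, hst⟩ := ih _ hc
    have hma : m a = a := hfix a (by simp)
    have hmb : m b = b := hfix b (by simp)
    refine ⟨fun x => if x = a then b else if x = b then a else m x, ?_, ?_, ?_⟩
    · intro x
      by_cases hxa : x = a
      · subst hxa
        simp
      by_cases hxb : x = b
      · subst hxb
        simp [hxa]
      have h1 : m x ≠ a := fun h => hxa (by rw [← hinv x, h, hma])
      have h2 : m x ≠ b := fun h => hxb (by rw [← hinv x, h, hmb])
      simp [hxa, hxb, h1, h2, hinv]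
    · intro x hx
      have h1 : x ≠ a := fun h => hx (h ▸ ha)
      have h2 : x ≠ b := fun h => hx (h ▸ hb)
      simp only [h1, h2, if_false]
      exact hfix x (by simp [hx])
    · have key : ∀ u, (u = a ∨ u = b) →
          W u (if u = a then b else if u = b then a else m u) = W a b := by
        intro u hu
        by_cases hua : u = a
        · subst hua; simp
        · have : u = b := by tauto
          subst this
          simp [hua, hW]
      intro u hu v hv
      by_cases h1 : u = a ∨ u = b
      · left
        simp only [key u h1]
        exact hm u hu v hv
      by_cases h2 : v = a ∨ v = b
      · right
        simp only [key v h2]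
        exact hm u hu v hv
      push Not at h1 h2
      simp only [h1.1, h1.2, h2.1, h2.2, if_false]
      exact hst u (by simp [h1, hu]) v (by simp [h2, hv])

theorem valid_le_one {V : Type} [Fintype V] [DecidableEq V] (g : NCGame V)
    (hB : ∀ v, g.B v = 1) (s : V → V → ℝ) (hs : validState g s) (u v : V) : s u v ≤ 1 := by
  have h1 := hs.2.2 u
  rw [hB] at h1
  exact (Finset.single_le_sum (f := fun x => s u x) (fun x _ => hs.1 u x)
    (Finset.mem_univ v)).trans h1

theorem conv_le {h : ℝ → ℝ} (hc : ConvexOn ℝ (Set.Ici 0) h) (h0 : h 0 = 0) {x : ℝ}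
    (hx : 0 ≤ x) (hx1 : x ≤ 1) : h x ≤ x * h 1 := by
  have := hc.2 (show (0:ℝ) ∈ Set.Ici 0 by simp) (show (1:ℝ) ∈ Set.Ici 0 by simp) (show 0 ≤ 1 - x by linarith) hx (by ring)
  simpa [h0] using this

theorem sconv_lt {h : ℝ → ℝ} (hc : StrictConvexOn ℝ (Set.Ici 0) h) (h0 : h 0 = 0) {x : ℝ}
    (hx : 0 < x) (hx1 : x < 1) : h x < x * h 1 := by
  have := hc.2 (show (0:ℝ) ∈ Set.Ici 0 by simp) (show (1:ℝ) ∈ Set.Ici 0 by simp) (by norm_num)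
    (show 0 < 1 - x by linarith) hx (by ring)
  simpa [h0] using this

/-- minimum effort games with uniform budgets and convex `h_e`
possess a pairwise equilibrium; with strictly convex `h_e` every pairwise
equilibrium is integral. -/
theorem min_effort_convex_uniform_exists (g : NCGame V)
    (hB : ∀ v, g.B v = 1)
    (h : V → V → ℝ → ℝ)
    (hmin : ∀ u v, g.Adj u v → ∀ x y, g.f u v x y = h u v (min x y))
    (hmono : ∀ u v, g.Adj u v → MonotoneOn (h u v) (Set.Ici 0))
    (h0 : ∀ u v, g.Adj u v → h u v 0 = 0)
    (hconv : ∀ u v, g.Adj u v → ConvexOn ℝ (Set.Ici 0) (h u v)) :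
    (∃ s, IsPairwiseEq g s) ∧
    ((∀ u v, g.Adj u v → StrictConvexOn ℝ (Set.Ici 0) (h u v)) →
      ∀ s, IsPairwiseEq g s → ∀ u v, g.Adj u v →
        min (s u v) (s v u) = 0 ∨ min (s u v) (s v u) = 1) := by
  classical
  have hsym : ∀ u v, g.Adj u v → ∀ x, h u v x = h v u x := by
    intro u v huv x
    have h1 := hmin u v huv x x
    have h2 := hmin v u (g.adj_symm _ _ huv) x x
    rw [min_self] at h1 h2
    rw [← h1, ← h2, g.f_comm]
  have hpos : ∀ u v, g.Adj u v → 0 ≤ h u v 1 := by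
    intro u v huv
    rw [← h0 u v huv]
    exact hmono u v huv (by simp) (by simp) zero_le_one
  constructor
  · obtain ⟨W, hWdef⟩ : ∃ W : V → V → ℝ, ∀ u v, W u v = if g.Adj u v then h u v 1 else 0 :=
      ⟨_, fun _ _ => rfl⟩
    have hWpos : ∀ u v, 0 ≤ W u v := by
      intro u v
      rw [hWdef]
      split_ifs with hh
      · exact hpos u v hh
      · exact le_rfl
    have hWs : ∀ u v, W u v = W v u := by
      intro u v
      rw [hWdef, hWdef]
      by_cases hh : g.Adj u v
      · rw [if_pos hh, if_pos (g.adj_symm _ _ hh), hsym u v hh]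
      · rw [if_neg hh, if_neg (fun h' => hh (g.adj_symm _ _ h'))]
    obtain ⟨m, hinv, -, hst⟩ := stable_aux W hWs _ Finset.univ le_rfl
    obtain ⟨s, hs⟩ : ∃ s : V → V → ℝ, ∀ u v, s u v = if m u = v then
        (if g.Adj u v then 1 else 0) else 0 := ⟨_, fun _ _ => rfl⟩
    have hss : ∀ u v, s u v = s v u := by
      intro u v
      rw [hs, hs]
      have e1 : m u = v ↔ m v = u :=
        ⟨fun h' => by rw [← h', hinv], fun h' => by rw [← h', hinv]⟩
      have e2 : g.Adj u v ↔ g.Adj v u := ⟨g.adj_symm _ _, g.adj_symm _ _⟩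
      simp only [e1, e2]
    have hsv : validState g s := by
      refine ⟨?_, ?_, ?_⟩
      · intro v u
        rw [hs]
        split_ifs <;> norm_num
      · intro v u hvu
        rw [hs]
        simp [hvu]
      · intro v
        simp only [hs, hB, Finset.sum_ite_eq, Finset.mem_univ, if_true]
        split_ifs <;> norm_num
    have hutil : ∀ u, util g s u = W u (m u) := by
      intro u
      unfold util
      rw [Finset.sum_eq_single (m u)]
      · rw [hWdef]
        split_ifs with hh
        · rw [hmin _ _ hh, hss (m u) u, min_self, hs]
          simp [hh]
        · rfl
      · intro x _ hx
        split_ifs with hh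
        · rw [hmin _ _ hh, hss x u, min_self, hs, if_neg (Ne.symm hx), h0 _ _ hh]
        · rfl
      · simp
    have hdev : ∀ s' u v, validState g s' → (∀ x, x ≠ u → x ≠ v → s' x = s x) →
        util g s' u ≤ max (W u v) (W u (m u)) := by
      intro s' u v hv' hag
      have hC0 : 0 ≤ max (W u v) (W u (m u)) := (hWpos u v).trans (le_max_left _ _)
      have hterm : util g s' u ≤ ∑ x, s' u x * max (W u v) (W u (m u)) := by
        unfold util
        apply Finset.sum_le_sum
        intro x _
        split_ifs with hh
        · rw [hmin _ _ hh]
          have hm0 : 0 ≤ min (s' u x) (s' x u) := le_min (hv'.1 _ _) (hv'.1 _ _)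
          have hm1 : min (s' u x) (s' x u) ≤ 1 :=
            (min_le_left _ _).trans (valid_le_one g hB s' hv' _ _)
          have hle := conv_le (hconv u x hh) (h0 u x hh) hm0 hm1
          by_cases hx : x = v ∨ x = m u
          · have hWC : h u x 1 ≤ max (W u v) (W u (m u)) := by
              have : W u x = h u x 1 := by rw [hWdef, if_pos hh]
              rw [← this]
              rcases hx with rfl | rfl
              · exact le_max_left _ _
              · exact le_max_right _ _
            exact hle.trans (mul_le_mul (min_le_left _ _) hWC (hpos u x hh) (hv'.1 _ _))
          · push Not at hx
            have hxu : x ≠ u := fun e => g.adj_irrefl u (by rw [e] at hh; exact hh)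
            have : s' x u = 0 := by
              rw [hag x hxu hx.1, hss, hs, if_neg (Ne.symm hx.2)]
            rw [this, min_eq_right (hv'.1 _ _), h0 u x hh]
            exact mul_nonneg (hv'.1 _ _) hC0
        · exact mul_nonneg (hv'.1 _ _) hC0
      rw [← Finset.sum_mul] at hterm
      have hb := hv'.2.2 u
      rw [hB] at hb
      exact hterm.trans (mul_le_of_le_one_left hC0 hb)
    refine ⟨s, ⟨hsv, ?_⟩, ?_⟩
    · intro v t ht
      have := hdev _ v v ht (fun x hx _ => by simp [hx])
      rw [hutil]
      refine this.trans (max_le ?_ le_rfl)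
      rw [hWdef v v, if_neg (g.adj_irrefl v)]
      exact hWpos _ _
    · rintro u v tu tv huv ht ⟨h1, h2⟩
      have d1 := hdev _ u v ht (fun x hx hx' => by simp [hx, hx'])
      have d2 := hdev _ v u ht (fun x hx hx' => by simp [hx, hx'])
      have h1' := h1.trans_le d1
      have h2' := h2.trans_le d2
      rw [hutil, lt_max_iff] at h1' h2'
      have h1'' := h1'.resolve_right (lt_irrefl _)
      have h2'' := h2'.resolve_right (lt_irrefl _)
      rw [hWs v u] at h2''
      rcases hst u (Finset.mem_univ _) v (Finset.mem_univ _) with h3 | h3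
      · exact absurd h1'' (not_lt.2 h3)
      · exact absurd h2'' (not_lt.2 h3)
  · intro hstr s hs u₀ v₀ huv₀
    by_contra hcon
    push Not at hcon
    have hv := hs.1.1
    have hm0 : ∀ u v, 0 ≤ min (s u v) (s v u) := fun u v => le_min (hv.1 _ _) (hv.1 _ _)
    have hm1 : ∀ u v, min (s u v) (s v u) ≤ 1 := fun u v =>
      (min_le_left _ _).trans (valid_le_one g hB s hv _ _)
    obtain ⟨F, hF⟩ : ∃ F : Finset (V × V), ∀ p, p ∈ F ↔ g.Adj p.1 p.2 ∧
        0 < min (s p.1 p.2) (s p.2 p.1) ∧ min (s p.1 p.2) (s p.2 p.1) < 1 :=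
      ⟨Finset.univ.filter (fun p => g.Adj p.1 p.2 ∧
        0 < min (s p.1 p.2) (s p.2 p.1) ∧ min (s p.1 p.2) (s p.2 p.1) < 1),
        fun p => by rw [Finset.mem_filter]; simp only [Finset.mem_univ, true_and]⟩
    obtain ⟨⟨u, v⟩, huvF, hmax⟩ := Finset.exists_max_image F (fun p => h p.1 p.2 1)
      ⟨(u₀, v₀), (hF _).2 ⟨huv₀, lt_of_le_of_ne (hm0 _ _) (Ne.symm hcon.1),
        lt_of_le_of_ne (hm1 _ _) hcon.2⟩⟩
    obtain ⟨huv, hp, hl⟩ := (hF _).1 huvF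
    simp only at huv hp hl hmax
    have hlt : ∀ a b, g.Adj a b → 0 < min (s a b) (s b a) → min (s a b) (s b a) < 1 →
        (∀ p ∈ F, h p.1 p.2 1 ≤ h a b 1) → util g s a < h a b 1 := by
      intro a b hab hp hl hmax
      have h1 : util g s a < ∑ x, min (s a x) (s x a) * h a b 1 := by
        unfold util
        have hgen : ∀ x, (if g.Adj a x then g.f a x (s a x) (s x a) else 0) ≤
            min (s a x) (s x a) * h a b 1 := by
          intro x
          split_ifs with hh
          · rw [hmin _ _ hh]
            rcases (hm0 a x).eq_or_lt with e | e
            · rw [← e, h0 _ _ hh]; simp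
            · have hx1 : min (s a x) (s x a) < 1 := by
                by_cases hxb : x = b
                · subst hxb; exact hl
                have hbud := hv.2.2 a
                rw [hB] at hbud
                have h2 : s a x + s a b ≤ ∑ y, s a y := by
                  rw [← Finset.sum_pair hxb]
                  exact Finset.sum_le_sum_of_subset_of_nonneg (Finset.subset_univ _)
                    (fun y _ _ => hv.1 a y)
                have h3 := min_le_left (s a x) (s x a)
                have h4 := min_le_left (s a b) (s b a)
                linarith
              have h5 := conv_le (hconv a x hh) (h0 a x hh) e.le hx1.le
              exact h5.trans (mul_le_mul_of_nonneg_left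
                (hmax (a, x) ((hF _).2 ⟨hh, e, hx1⟩)) e.le)
          · exact mul_nonneg (hm0 _ _) (hpos a b hab)
        refine Finset.sum_lt_sum (fun x _ => hgen x) ⟨b, Finset.mem_univ _, ?_⟩
        rw [if_pos hab, hmin _ _ hab]
        exact sconv_lt (hstr a b hab) (h0 a b hab) hp hl
      rw [← Finset.sum_mul] at h1
      have hbud := hv.2.2 a
      rw [hB] at hbud
      have h2 : ∑ x, min (s a x) (s x a) ≤ 1 :=
        (Finset.sum_le_sum (fun x _ => min_le_left _ _)).trans hbud
      exact h1.trans_le (mul_le_of_le_one_left (hpos a b hab) h2)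
    have hvu := g.adj_symm _ _ huv
    have hne : u ≠ v := fun e => g.adj_irrefl v (by rw [e] at huv; exact huv)
    have hu := hlt u v huv hp hl hmax
    have hv2 := hlt v u hvu (by rwa [min_comm]) (by rwa [min_comm])
      (by rw [← hsym u v huv]; exact hmax)
    obtain ⟨s', hs'⟩ : ∃ s', s' = Function.update (Function.update s u (Pi.single v 1)) v
      (Pi.single u 1) := ⟨_, rfl⟩
    have hsu : s' u = Pi.single v 1 := by rw [hs']; simp [hne]
    have hsv : s' v = Pi.single u 1 := by rw [hs']; simp
    have hso : ∀ x, x ≠ u → x ≠ v → s' x = s x := by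
      intro x h1 h2; rw [hs']; simp [h1, h2]
    have hval : validState g s' := by
      have hsing : ∀ a b, g.Adj a b → (∀ y, 0 ≤ (Pi.single b 1 : V → ℝ) y) ∧
          (∀ y, ¬ g.Adj a y → (Pi.single b 1 : V → ℝ) y = 0) ∧
          ∑ y, (Pi.single b 1 : V → ℝ) y ≤ g.B a := by
        intro a b hab
        refine ⟨fun y => ?_, fun y hy => ?_, ?_⟩
        · rw [Pi.single_apply]; split_ifs <;> norm_num
        · rw [Pi.single_apply, if_neg]
          rintro rfl
          exact hy hab
        · rw [hB]; simp
      have hall : ∀ x, (∀ y, 0 ≤ s' x y) ∧ (∀ y, ¬ g.Adj x y → s' x y = 0) ∧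
          ∑ y, s' x y ≤ g.B x := by
        intro x
        by_cases h1 : x = u
        · subst h1; rw [hsu]; exact hsing _ _ huv
        by_cases h2 : x = v
        · subst h2; rw [hsv]; exact hsing _ _ hvu
        rw [hso x h1 h2]
        exact ⟨hv.1 x, hv.2.1 x, hv.2.2 x⟩
      exact ⟨fun x => (hall x).1, fun x => (hall x).2.1, fun x => (hall x).2.2⟩
    have hge : ∀ a b, g.Adj a b → s' a b = 1 → s' b a = 1 → h a b 1 ≤ util g s' a := by
      intro a b hab e1 e2
      unfold util
      have := Finset.single_le_sum
        (f := fun x => if g.Adj a x then g.f a x (s' a x) (s' x a) else 0)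
        (s := Finset.univ) (fun x _ => by
          split_ifs
          · exact g.f_nonneg _ _ _ _ (hval.1 _ _) (hval.1 _ _)
          · exact le_rfl) (Finset.mem_univ b)
      simp only [if_pos hab, hmin _ _ hab, e1, e2, min_self] at this
      exact this
    have e1 : s' u v = 1 := by rw [hsu]; simp
    have e2 : s' v u = 1 := by rw [hsv]; simp
    refine hs.2 u v (Pi.single v 1) (Pi.single u 1) hne (hs' ▸ hval) ?_
    rw [← hs']
    exact ⟨hu.trans_le (hge u v huv e1 e2), hv2.trans_le (hge v u hvu e2 e1)⟩
end
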